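/- arXiv:1109.4505 — 7 statements merged into one kernel-verified Lean document; each statement's English description precedes it below -/
import Mathlib

section
/- Let G be a group, E a Riesz space, and ρ : G → Aut⁺(E) a positive representation. Then ρ is order indecomposable if and only if ρ is projection band irreducible. -/
/-- A (Riesz) ideal of an ordered real vector space: a submodule `I` such that
`|x| ≤ |y|` and `y ∈ I` imply `x ∈ I`. -/
def IsRieszIdeal {E : Type*} [AddCommGroup E] [Lattice E] [Module ℝ E]
    (I : Submodule ℝ E) : Prop :=
  ∀ x y : E, |x| ≤ |y| → y ∈ I → x ∈ I

/-- A band: an ideal closed under suprema of its subsets (when they exist in `E`). -/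
def IsBand {E : Type*} [AddCommGroup E] [Lattice E] [Module ℝ E]
    (B : Submodule ℝ E) : Prop :=
  IsRieszIdeal B ∧ ∀ (D : Set E) (x : E), D ⊆ (B : Set E) → IsLUB D x → x ∈ B

/-- The disjoint complement of a set `D`. -/
def disjComplement {E : Type*} [AddCommGroup E] [Lattice E] (D : Set E) : Set E :=
  {x : E | ∀ y ∈ D, |x| ⊓ |y| = 0}

/-- A projection band: a band `B` with `E = B ⊕ Bᵈ`. -/
def IsProjectionBand {E : Type*} [AddCommGroup E] [Lattice E] [Module ℝ E]
    (B : Submodule ℝ E) : Prop :=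
  IsBand B ∧ ∀ x : E, ∃ y ∈ B, ∃ z ∈ disjComplement (B : Set E), x = y + z

/-- An order direct sum decomposition `E = L ⊕ M`: every element decomposes uniquely
as a sum of an element of `L` and an element of `M`, and an element is positive iff
both its components are positive. -/
def IsOrderDecomposition {E : Type*} [AddCommGroup E] [Lattice E] [Module ℝ E]
    (L M : Submodule ℝ E) : Prop :=
  (∀ x : E, ∃ y ∈ L, ∃ z ∈ M, x = y + z) ∧
  (∀ x : E, x ∈ L → x ∈ M → x = 0) ∧
  (∀ y z : E, y ∈ L → z ∈ M → (0 ≤ y + z ↔ 0 ≤ y ∧ 0 ≤ z))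

/-- A homomorphism `ρ : G →* (E ≃ₗ[ℝ] E)` is a positive representation when each
`ρ s` is an order isomorphism (hence a lattice automorphism). -/
def IsPositiveRep {E : Type*} [AddCommGroup E] [Lattice E] [Module ℝ E]
    {G : Type*} [Group G] (ρ : G →* (E ≃ₗ[ℝ] E)) : Prop :=
  ∀ (s : G) (x y : E), x ≤ y ↔ ρ s x ≤ ρ s y

/-- A submodule is `ρ`-invariant if it is mapped into itself by every `ρ s`. -/
def InvariantSubmodule {E : Type*} [AddCommGroup E] [Lattice E] [Module ℝ E]
    {G : Type*} [Group G] (ρ : G →* (E ≃ₗ[ℝ] E)) (B : Submodule ℝ E) : Prop :=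
  ∀ (s : G), ∀ x ∈ B, ρ s x ∈ B

/-- `ρ` is order indecomposable if the only `ρ`-invariant order direct sum
decompositions `E = L ⊕ M` are the trivial ones. -/
def OrderIndecomposable {E : Type*} [AddCommGroup E] [Lattice E] [Module ℝ E]
    {G : Type*} [Group G] (ρ : G →* (E ≃ₗ[ℝ] E)) : Prop :=
  ∀ L M : Submodule ℝ E, IsOrderDecomposition L M →
    InvariantSubmodule ρ L → InvariantSubmodule ρ M → L = ⊥ ∨ L = ⊤

/-- `ρ` is projection band irreducible if the only `ρ`-invariant projection bands
are `{0}` and `E`. -/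
def ProjectionBandIrreducible {E : Type*} [AddCommGroup E] [Lattice E] [Module ℝ E]
    {G : Type*} [Group G] (ρ : G →* (E ≃ₗ[ℝ] E)) : Prop :=
  ∀ B : Submodule ℝ E, IsProjectionBand B → InvariantSubmodule ρ B → B = ⊥ ∨ B = ⊤

section helpers

variable {E : Type*} [AddCommGroup E] [Lattice E] [Module ℝ E]

theorem decomp_symm {L M : Submodule ℝ E} (h : IsOrderDecomposition L M) :
    IsOrderDecomposition M L := by
  obtain ⟨h1, h2, h3⟩ := h
  refine ⟨fun x => ?_, fun x hx hy => h2 x hy hx, fun y z hy hz => ?_⟩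
  · obtain ⟨y, hy, z, hz, e⟩ := h1 x
    exact ⟨z, hz, y, hy, by rw [e, add_comm]⟩
  · rw [add_comm, h3 z y hz hy, and_comm]

variable [IsOrderedAddMonoid E]

theorem decomp_pos {L M : Submodule ℝ E} (h : IsOrderDecomposition L M)
    {x y : E} (hx : 0 ≤ x) (hxy : x ≤ y) (hy : y ∈ L) : x ∈ L := by
  obtain ⟨h1, h2, h3⟩ := h
  obtain ⟨a, ha, b, hb, rfl⟩ := h1 x
  have hb0 := ((h3 a b ha hb).1 hx).2
  have hb1 := ((h3 (y - a) (-b) (L.sub_mem hy ha) (M.neg_mem hb)).1 (by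
    have := sub_nonneg.2 hxy
    convert this using 1
    abel)).2
  have : b = 0 := le_antisymm (neg_nonneg.1 hb1) hb0
  simpa [this] using ha

theorem decomp_abs {L M : Submodule ℝ E} (h : IsOrderDecomposition L M)
    {y : E} (hy : y ∈ L) : |y| ∈ L := by
  obtain ⟨h1, h2, h3⟩ := h
  obtain ⟨a, ha, b, hb, e⟩ := h1 |y|
  have p1 := (h3 (a - y) b (L.sub_mem ha hy) hb).1 (by
    have := sub_nonneg.2 (le_abs_self y)
    rw [e] at this
    convert this using 1
    abel)
  have p2 := (h3 (a + y) b (L.add_mem ha hy) hb).1 (by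
    have := sub_nonneg.2 (neg_le_abs y)
    rw [e] at this
    convert this using 1
    abel)
  have p3 : |y| ≤ a := abs_le'.2 ⟨sub_nonneg.1 p1.1, by
    have := p2.1
    rw [← sub_neg_eq_add] at this
    exact sub_nonneg.1 this⟩
  rw [e] at p3
  have : b = 0 := le_antisymm (by simpa using p3) p1.2
  rw [e]
  simpa [this] using ha

theorem decomp_ideal {L M : Submodule ℝ E} (h : IsOrderDecomposition L M) :
    IsRieszIdeal L := by
  intro x y hxy hy
  have hx : |x| ∈ L := decomp_pos h (abs_nonneg x) hxy (decomp_abs h hy)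
  have h1 : x⁺ ∈ L := decomp_pos h (posPart_nonneg x)
    (sup_le (le_abs_self x) (abs_nonneg x)) hx
  have h2 : x⁻ ∈ L := decomp_pos h (negPart_nonneg x)
    (sup_le (neg_le_abs x) (abs_nonneg x)) hx
  rw [← posPart_sub_negPart x]
  exact L.sub_mem h1 h2

theorem decomp_proj {L M : Submodule ℝ E} (h : IsOrderDecomposition L M) :
    IsProjectionBand L := by
  refine ⟨⟨decomp_ideal h, ?_⟩, ?_⟩
  · intro D x hD hx
    obtain ⟨h1, h2, h3⟩ := h
    obtain ⟨a, ha, b, hb, rfl⟩ := h1 x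
    have key : ∀ d ∈ D, 0 ≤ a - d ∧ 0 ≤ b := fun d hd =>
      (h3 (a - d) b (L.sub_mem ha (hD hd)) hb).1 (by
        have := sub_nonneg.2 (hx.1 hd)
        convert this using 1
        abel)
    have hba : a + b ≤ a := hx.2 fun d hd => sub_nonneg.1 (key d hd).1
    have hbb : a + b ≤ a + b + b := hx.2 fun d hd =>
      (hx.1 hd).trans (le_add_of_nonneg_right (key d hd).2)
    have : b = 0 := le_antisymm (by simpa using hba) (by simpa using hbb)
    simpa [this] using ha
  · intro x
    obtain ⟨y, hy, z, hz, e⟩ := h.1 x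
    refine ⟨y, hy, z, fun w hw => ?_, e⟩
    have n : 0 ≤ |z| ⊓ |w| := le_inf (abs_nonneg _) (abs_nonneg _)
    exact h.2.1 _ (decomp_pos h n inf_le_right (decomp_abs h hw))
      (decomp_pos (decomp_symm h) n inf_le_left (decomp_abs (decomp_symm h) hz))

theorem inf_add_le_aux {a b c : E} (ha : 0 ≤ a) (hb : 0 ≤ b) (hc : 0 ≤ c)
    (h1 : a ⊓ c = 0) (h2 : b ⊓ c = 0) : (a + b) ⊓ c = 0 := by
  apply le_antisymm _ (le_inf (add_nonneg ha hb) hc)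
  have : (a + b) ⊓ c ≤ b := by
    calc (a + b) ⊓ c ≤ (a + b) ⊓ (c + b) := inf_le_inf_left _ (le_add_of_nonneg_right hb)
      _ = a ⊓ c + b := (inf_add _ _ _).symm
      _ = b := by rw [h1, zero_add]
  exact (le_inf this inf_le_right).trans h2.le

theorem disj_mono {D : Set E} {x y : E} (hy : y ∈ disjComplement D) (h : |x| ≤ |y|) :
    x ∈ disjComplement D := fun w hw =>
  le_antisymm ((inf_le_inf_right _ h).trans (hy w hw).le)
    (le_inf (abs_nonneg _) (abs_nonneg _))

theorem disj_add {D : Set E} {x y : E} (hx : x ∈ disjComplement D)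
    (hy : y ∈ disjComplement D) : x + y ∈ disjComplement D := by
  intro w hw
  apply le_antisymm _ (le_inf (abs_nonneg _) (abs_nonneg _))
  exact (inf_le_inf_right _ (abs_add_le x y)).trans
    (inf_add_le_aux (abs_nonneg x) (abs_nonneg y) (abs_nonneg w) (hx w hw) (hy w hw)).le

theorem disj_zero {D : Set E} : (0 : E) ∈ disjComplement D := by
  intro w hw
  rw [abs_zero]
  exact inf_eq_left.2 (abs_nonneg w)

theorem disj_nsmul {D : Set E} {x : E} (hx : x ∈ disjComplement D) (n : ℕ) :
    n • x ∈ disjComplement D := by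
  induction n with
  | zero => rw [zero_smul]; exact disj_zero
  | succ k ih => rw [succ_nsmul]; exact disj_add ih hx

theorem abs_smul_le_aux (hsmul : ∀ (c : ℝ) (x : E), 0 ≤ c → 0 ≤ x → 0 ≤ c • x)
    (c : ℝ) (x : E) : |c • x| ≤ |c| • |x| := by
  have p1 := sub_nonneg.2 (le_abs_self x)
  have p2 := sub_nonneg.2 (neg_le_abs x)
  have q1 := hsmul |c| _ (abs_nonneg c) p1
  have q2 := hsmul |c| _ (abs_nonneg c) p2
  rw [smul_sub, sub_nonneg] at q1 q2
  rcases abs_choice c with h | h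
  · rw [h] at q1 q2 ⊢
    exact abs_le'.2 ⟨q1, by simpa using q2⟩
  · rw [h] at q1 q2 ⊢
    exact abs_le'.2 ⟨by simpa using q2, by simpa using q1⟩

theorem disj_smul (hsmul : ∀ (c : ℝ) (x : E), 0 ≤ c → 0 ≤ x → 0 ≤ c • x)
    {D : Set E} {x : E} (hx : x ∈ disjComplement D) (c : ℝ) :
    c • x ∈ disjComplement D := by
  obtain ⟨n, hn⟩ := exists_nat_ge |c|
  have hax : |x| ∈ disjComplement D := disj_mono hx (abs_abs x).le
  refine disj_mono (disj_nsmul hax n) ((abs_smul_le_aux hsmul c x).trans ?_)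
  refine le_trans ?_ (le_abs_self _)
  have := hsmul (n - |c|) |x| (sub_nonneg.2 hn) (abs_nonneg x)
  rw [sub_smul, sub_nonneg, Nat.cast_smul_eq_nsmul] at this
  exact this

/-- The disjoint complement as a submodule. -/
def disjSub (hsmul : ∀ (c : ℝ) (x : E), 0 ≤ c → 0 ≤ x → 0 ≤ c • x) (D : Set E) :
    Submodule ℝ E where
  carrier := disjComplement D
  add_mem' := disj_add
  zero_mem' := disj_zero
  smul_mem' c _ hx := disj_smul hsmul hx c

theorem disj_pos {y z : E} (h : |z| ⊓ |y| = 0) (hp : 0 ≤ y + z) : 0 ≤ y := by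
  have h1 : -y ≤ |z| := (neg_le_iff_add_nonneg'.2 hp).trans (le_abs_self z)
  have := (le_inf h1 (neg_le_abs y)).trans h.le
  exact neg_nonpos.1 this

theorem proj_decomp (hsmul : ∀ (c : ℝ) (x : E), 0 ≤ c → 0 ≤ x → 0 ≤ c • x)
    {B : Submodule ℝ E} (h : IsProjectionBand B) :
    IsOrderDecomposition B (disjSub hsmul (B : Set E)) := by
  refine ⟨h.2, fun x hx hx' => ?_, fun y z hy hz => ⟨fun hp => ?_, fun hp => add_nonneg hp.1 hp.2⟩⟩
  · have := hx' x hx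
    rw [inf_idem] at this
    exact le_antisymm ((le_abs_self x).trans this.le)
      (neg_nonpos.1 ((neg_le_abs x).trans this.le))
  · have := hz y hy
    exact ⟨disj_pos this hp, disj_pos (by rw [inf_comm]; exact this) (by rwa [add_comm])⟩

end helpers

/-- A positive representation of a group `G` in a Riesz space `E` is order
indecomposable if and only if it is projection band irreducible. -/
theorem stmt1 {G E : Type*} [Group G] [AddCommGroup E] [Lattice E] [Module ℝ E]
    (hadd : ∀ x y z : E, x ≤ y → x + z ≤ y + z)
    (hsmul : ∀ (c : ℝ) (x : E), 0 ≤ c → 0 ≤ x → 0 ≤ c • x)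
    (ρ : G →* (E ≃ₗ[ℝ] E)) (hρ : IsPositiveRep ρ) :
    OrderIndecomposable ρ ↔ ProjectionBandIrreducible ρ := by
  haveI : IsOrderedAddMonoid E := { add_le_add_left := fun a b h c => hadd a b c h }
  constructor
  · intro h B hB hinv
    refine h B _ (proj_decomp hsmul hB) hinv ?_
    intro s x hx w hw
    have hw' := hx (ρ s⁻¹ w) (hinv s⁻¹ w hw)
    let e : E ≃o E := { (ρ s).toEquiv with map_rel_iff' := fun {a b} => (hρ s a b).symm }
    have he : ∀ a, e a = ρ s a := fun _ => rfl
    have habs : ∀ a, |ρ s a| = ρ s |a| := by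
      intro a
      rw [abs, abs, ← he, ← he, map_sup, he, he, map_neg]
    have hsw : ρ s (ρ s⁻¹ w) = w := by
      rw [← LinearEquiv.mul_apply, ← map_mul]
      simp
    have := congrArg (ρ s) hw'
    rw [← he, map_inf, he, he, ← habs, ← habs, hsw, map_zero] at this
    exact this
  · intro h L M hd hL _
    exact h L (decomp_proj hd) hL
end

section
/- Let G be a finite group, E a Riesz space, and ρ : G → Aut⁺(E) a positive representation that is principal band irreducible. Then E is Archimedean. -/
/-- A principal band: the band generated by a single element, i.e. the smallest band
containing some element `x`. -/
def IsPrincipalBand {E : Type*} [AddCommGroup E] [Lattice E] [Module ℝ E]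
    (B : Submodule ℝ E) : Prop :=
  IsBand B ∧ ∃ x ∈ B, ∀ C : Submodule ℝ E, IsBand C → x ∈ C → B ≤ C

/-- `ρ` is principal band irreducible if the only `ρ`-invariant principal bands are
`{0}` and `E`. -/
def PrincipalBandIrreducible {E : Type*} [AddCommGroup E] [Lattice E] [Module ℝ E]
    {G : Type*} [Group G] (ρ : G →* (E ≃ₗ[ℝ] E)) : Prop :=
  ∀ B : Submodule ℝ E, IsPrincipalBand B → InvariantSubmodule ρ B → B = ⊥ ∨ B = ⊤

/-- `E` is Archimedean: if `0 ≤ n • x ≤ y` for all positive integers `n`, then `x = 0`. -/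
def RieszArchimedean (E : Type*) [AddCommGroup E] [Lattice E] [Module ℝ E] : Prop :=
  ∀ x y : E, (∀ n : ℕ, 0 < n → 0 ≤ n • x ∧ n • x ≤ y) → x = 0

/-- `a` is the supremum of the elements `a ⊓ n • z`. -/
def ApproxBy {E : Type*} [AddCommGroup E] [Lattice E] (z a : E) : Prop :=
  ∀ t : E, (∀ n : ℕ, a ⊓ n • z ≤ t) → a ≤ t

theorem ApproxBy.mono {E : Type*} [AddCommGroup E] [Lattice E] [IsOrderedAddMonoid E]
    {z a b : E} (ha : ApproxBy z a) (hb : b ≤ a) : ApproxBy z b := by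
  intro t ht
  have h : a ≤ t + (a - b) := by
    apply ha
    intro n
    have h1 : a ⊓ n • z - (a - b) ≤ b ⊓ n • z := by
      apply le_inf
      · have : a ⊓ n • z ≤ a := inf_le_left
        calc a ⊓ n • z - (a - b) ≤ a - (a - b) := sub_le_sub_right this _
          _ = b := by abel
      · calc a ⊓ n • z - (a - b) ≤ a ⊓ n • z := sub_le_self _ (sub_nonneg.2 hb)
          _ ≤ n • z := inf_le_right
    exact sub_le_iff_le_add.1 (h1.trans (ht n))
  have h2 : a - (a - b) ≤ t := sub_le_iff_le_add.2 h
  simpa using h2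

theorem ApproxBy.add {E : Type*} [AddCommGroup E] [Lattice E] [IsOrderedAddMonoid E]
    {z a b : E} (ha : ApproxBy z a) (hb : ApproxBy z b) : ApproxBy z (a + b) := by
  intro t ht
  have h1 : b ≤ t - a := by
    apply hb
    intro m
    have h2 : a ≤ t - b ⊓ m • z := by
      apply ha
      intro n
      rw [le_sub_iff_add_le]
      refine le_trans (le_inf (add_le_add inf_le_left inf_le_left) ?_) (ht (n + m))
      rw [add_smul]
      exact add_le_add inf_le_right inf_le_right
    rw [le_sub_iff_add_le] at h2 ⊢
    rwa [add_comm]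
  rw [le_sub_iff_add_le] at h1
  rwa [add_comm]

theorem approxBy_zero {E : Type*} [AddCommGroup E] [Lattice E] (z : E) : ApproxBy z 0 := by
  intro t ht
  simpa using ht 0

theorem ApproxBy.nsmul {E : Type*} [AddCommGroup E] [Lattice E] [IsOrderedAddMonoid E]
    {z a : E} (ha : ApproxBy z a) (n : ℕ) : ApproxBy z (n • a) := by
  induction n with
  | zero => simpa using approxBy_zero z
  | succ k ih => rw [succ_nsmul]; exact ih.add ha

theorem riesz_abs_smul_le {E : Type*} [AddCommGroup E] [Lattice E] [Module ℝ E]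
    [IsOrderedAddMonoid E]
    (hsmul : ∀ (c : ℝ) (x : E), 0 ≤ c → 0 ≤ x → 0 ≤ c • x) (c : ℝ) (a : E) :
    ∃ n : ℕ, |c • a| ≤ n • |a| := by
  obtain ⟨n, hn⟩ := exists_nat_ge |c|
  refine ⟨n, ?_⟩
  have key : ∀ (d : ℝ), |d| ≤ n → d • a ≤ n • |a| := by
    intro d hd
    rw [← Nat.cast_smul_eq_nsmul ℝ]
    rcases le_total 0 d with h | h
    · rw [abs_of_nonneg h] at hd
      have e1 := hsmul d (|a| - a) h (sub_nonneg.2 (le_abs_self a))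
      have e2 := hsmul (n - d) |a| (sub_nonneg.2 hd) (abs_nonneg a)
      rw [← sub_nonneg]
      have e3 := add_nonneg e1 e2
      rw [smul_sub, sub_smul] at e3
      convert e3 using 1
      abel
    · rw [abs_of_nonpos h] at hd
      have e1 := hsmul (-d) (|a| + a) (by linarith)
        (neg_le_iff_add_nonneg.1 (neg_le_abs a) |>.trans_eq (by abel))
      have e2 := hsmul (n - (-d)) |a| (sub_nonneg.2 hd) (abs_nonneg a)
      rw [← sub_nonneg]
      have e3 := add_nonneg e1 e2
      rw [smul_add, sub_smul, neg_smul, neg_smul] at e3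
      convert e3 using 1
      abel
  apply sup_le
  · exact key c hn
  · rw [← neg_smul]
    exact key (-c) (by simpa using hn)

/-- The principal band generated by a positive element `z`. -/
def principalBandOf {E : Type*} [AddCommGroup E] [Lattice E] [Module ℝ E]
    [IsOrderedAddMonoid E]
    (hsmul : ∀ (c : ℝ) (x : E), 0 ≤ c → 0 ≤ x → 0 ≤ c • x) (z : E) : Submodule ℝ E where
  carrier := {a | ApproxBy z |a|}
  add_mem' := by
    intro a b ha hb
    exact (ApproxBy.add ha hb).mono (abs_add_le a b)
  zero_mem' := by
    simpa using approxBy_zero z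
  smul_mem' := by
    intro c a ha
    obtain ⟨n, hn⟩ := riesz_abs_smul_le hsmul c a
    exact (ApproxBy.nsmul ha n).mono hn

theorem isBand_principalBandOf {E : Type*} [AddCommGroup E] [Lattice E] [Module ℝ E]
    [IsOrderedAddMonoid E]
    (hsmul : ∀ (c : ℝ) (x : E), 0 ≤ c → 0 ≤ x → 0 ≤ c • x) (z : E) :
    IsBand (principalBandOf hsmul z) := by
  refine ⟨fun x y hxy hy => ApproxBy.mono hy hxy, ?_⟩
  intro D x hD hx
  change ApproxBy z |x|
  have hpos : ApproxBy z x⁺ := by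
    intro t ht
    have h0 : 0 ≤ t := le_trans (le_inf (posPart_nonneg x) (by simp)) (ht 0)
    refine sup_le (hx.2 ?_) h0
    intro d hd
    have hd1 : ApproxBy z d⁺ := ApproxBy.mono (hD hd) (sup_le (le_abs_self d) (abs_nonneg d))
    refine (le_posPart d).trans (hd1 t fun n => ?_)
    exact (inf_le_inf_right _ (posPart_mono (hx.1 hd))).trans (ht n)
  have hneg : ApproxBy z x⁻ := by
    rcases D.eq_empty_or_nonempty with rfl | ⟨d, hd⟩
    · have hb : ∀ y, x ≤ y := fun y => hx.2 (by simp [upperBounds])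
      have h1 : x ≤ x + x := hb _
      have h2 : 0 ≤ x := by simpa using h1
      rw [negPart_eq_zero.2 h2]
      exact approxBy_zero z
    · refine ApproxBy.mono (hD hd) (sup_le ?_ (abs_nonneg d))
      exact (neg_le_neg (hx.1 hd)).trans (neg_le_abs d)
  rw [← posPart_add_negPart]
  exact hpos.add hneg

theorem isPrincipalBand_principalBandOf {E : Type*} [AddCommGroup E] [Lattice E] [Module ℝ E]
    [IsOrderedAddMonoid E]
    (hsmul : ∀ (c : ℝ) (x : E), 0 ≤ c → 0 ≤ x → 0 ≤ c • x) (z : E) (hz : 0 ≤ z) :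
    z ∈ principalBandOf hsmul z ∧ IsPrincipalBand (principalBandOf hsmul z) := by
  have hzm : z ∈ principalBandOf hsmul z := by
    change ApproxBy z |z|
    intro t ht
    have := ht 1
    rw [abs_of_nonneg hz] at this ⊢
    simpa using this
  refine ⟨hzm, isBand_principalBandOf hsmul z, z, hzm, ?_⟩
  intro C hC hzC a ha
  have hnz : ∀ n : ℕ, 0 ≤ n • z := fun n => nsmul_nonneg hz n
  have h1 : |a| ∈ C := by
    refine hC.2 (Set.range fun n : ℕ => |a| ⊓ n • z) |a| ?_ ⟨?_, ?_⟩
    · rintro _ ⟨n, rfl⟩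
      refine hC.1 _ (n • z) ?_ (C.nsmul_mem hzC n)
      rw [abs_of_nonneg (hnz n), abs_of_nonneg (le_inf (abs_nonneg a) (hnz n))]
      exact inf_le_right
    · rintro _ ⟨n, rfl⟩
      exact inf_le_left
    · intro t ht
      exact ha t fun n => ht ⟨n, rfl⟩
  exact hC.1 a |a| (by rw [abs_abs]) h1

/-- If a finite group has a principal band irreducible positive representation in a
Riesz space `E`, then `E` is Archimedean. -/
theorem stmt3 {G E : Type*} [Group G] [Finite G] [AddCommGroup E] [Lattice E] [Module ℝ E]
    (hadd : ∀ x y z : E, x ≤ y → x + z ≤ y + z)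
    (hsmul : ∀ (c : ℝ) (x : E), 0 ≤ c → 0 ≤ x → 0 ≤ c • x)
    (ρ : G →* (E ≃ₗ[ℝ] E)) (hρ : IsPositiveRep ρ)
    (hirr : PrincipalBandIrreducible ρ) :
    RieszArchimedean E := by
  have : IsOrderedAddMonoid E :=
    { add_le_add_left := fun a b h c => hadd a b c h }
  cases nonempty_fintype G
  intro x y hxy
  have hx0 : 0 ≤ x := by simpa using (hxy 1 one_pos).1
  have hmono : ∀ (s : G) {a b : E}, a ≤ b → ρ s a ≤ ρ s b := fun s a b h => (hρ s a b).1 h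
  have hinv : ∀ (s : G) (a : E), ρ s⁻¹ (ρ s a) = a := by
    intro s a
    rw [← LinearEquiv.mul_apply, ← map_mul]
    simp
  have hinv' : ∀ (s : G) (a : E), ρ s (ρ s⁻¹ a) = a := by
    intro s a
    rw [← LinearEquiv.mul_apply, ← map_mul]
    simp
  have hpos : ∀ (s : G) {a : E}, 0 ≤ a → 0 ≤ ρ s a := fun s a h => by
    simpa using hmono s h
  set z : E := ∑ s : G, ρ s x with hzdef
  set w : E := ∑ s : G, ρ s y with hwdef
  have hz0 : 0 ≤ z := Finset.sum_nonneg fun s _ => hpos s hx0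
  have hxz : x ≤ z := by
    have := Finset.single_le_sum (f := fun s : G => ρ s x) (fun s _ => hpos s hx0)
      (Finset.mem_univ 1)
    simpa using this
  have hzw : ∀ n : ℕ, 0 < n → n • z ≤ w := by
    intro n hn
    rw [hzdef, hwdef, Finset.smul_sum]
    refine Finset.sum_le_sum fun s _ => ?_
    rw [← map_nsmul]
    exact hmono s (hxy n hn).2
  have hρz : ∀ s : G, ρ s z = z := by
    intro s
    rw [hzdef, map_sum]
    refine Fintype.sum_equiv (Equiv.mulLeft s) _ _ fun g => ?_
    simp
  obtain ⟨hzm, hprin⟩ := isPrincipalBand_principalBandOf hsmul z hz0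
  have hI : InvariantSubmodule ρ (principalBandOf hsmul z) := by
    intro s a ha t ht
    have h1 : |a| ≤ ρ s⁻¹ t := by
      apply ha
      intro n
      have h2 : ρ s (|a| ⊓ n • z) ≤ |ρ s a| ⊓ n • z := by
        apply le_inf
        · have h3 : |a| ≤ ρ s⁻¹ |ρ s a| := by
            apply sup_le
            · simpa [hinv] using hmono s⁻¹ (le_abs_self (ρ s a))
            · simpa [hinv] using hmono s⁻¹ (neg_le_abs (ρ s a))
          simpa [hinv'] using hmono s (inf_le_left.trans h3)
        · have h3 := hmono s (inf_le_right : |a| ⊓ n • z ≤ n • z)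
          rwa [map_nsmul, hρz] at h3
      simpa [hinv] using hmono s⁻¹ (h2.trans (ht n))
    have h4 : ρ s |a| ≤ t := by simpa [hinv'] using hmono s h1
    refine le_trans (sup_le (hmono s (le_abs_self a)) ?_) h4
    rw [← map_neg]
    exact hmono s (neg_le_abs a)
  have hz : z ≤ 0 := by
    rcases hirr _ hprin hI with h | h
    · rw [h] at hzm
      exact le_of_eq ((Submodule.mem_bot ℝ).1 hzm)
    · have hw : w ∈ principalBandOf hsmul z := by rw [h]; trivial
      have hw0 : 0 ≤ w := hz0.trans (by simpa using hzw 1 one_pos)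
      have hw' : ApproxBy z |w| := hw
      rw [abs_of_nonneg hw0] at hw'
      have h1 : w ≤ w - z := by
        apply hw'
        intro n
        refine inf_le_right.trans ?_
        rw [le_sub_iff_add_le, ← succ_nsmul]
        exact hzw _ (Nat.succ_pos n)
      simpa using h1
  exact le_antisymm (hxz.trans hz) hx0
end

section
/- Let E be a Riesz space whose dimension as a real vector space is at least 2. Then E contains a principal band B with B ≠ {0} and B ≠ E. -/
theorem riesz_abs_zero {E : Type*} [AddCommGroup E] [Lattice E]
    [IsOrderedAddMonoid E] {x : E} (h : |x| = 0) : x = 0 := by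
  have h1 := le_abs_self x
  have h2 := neg_le_abs x
  rw [h] at h1 h2
  exact le_antisymm h1 (neg_nonpos.1 h2)

theorem exists_principal {E : Type*} [AddCommGroup E] [Lattice E] [Module ℝ E]
    (C : Submodule ℝ E) (hC : IsBand C) (hT : C ≠ ⊤) (x : E) (hx : x ∈ C) (hx0 : x ≠ 0) :
    ∃ B : Submodule ℝ E, IsPrincipalBand B ∧ B ≠ ⊥ ∧ B ≠ ⊤ := by
  have key : ∀ z, z ∈ sInf {C : Submodule ℝ E | IsBand C ∧ x ∈ C} ↔
      ∀ C : Submodule ℝ E, IsBand C → x ∈ C → z ∈ C := by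
    intro z
    simp [Submodule.mem_sInf]
  refine ⟨sInf {C : Submodule ℝ E | IsBand C ∧ x ∈ C}, ⟨⟨?_, ?_⟩, x, ?_, ?_⟩, ?_, ?_⟩
  · intro a b hab hb
    rw [key] at hb ⊢
    exact fun C h1 h2 => h1.1 a b hab (hb C h1 h2)
  · intro D s hD hs
    rw [key]
    exact fun C h1 h2 => h1.2 D s (fun d hd => (key d).1 (hD hd) C h1 h2) hs
  · rw [key]
    exact fun C _ h => h
  · intro C h1 h2
    exact sInf_le ⟨h1, h2⟩
  · intro h
    have : x ∈ sInf {C : Submodule ℝ E | IsBand C ∧ x ∈ C} := (key x).2 fun C _ h => h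
    rw [h] at this
    exact hx0 (by simpa using this)
  · intro h
    apply hT
    rw [eq_top_iff, ← h]
    exact sInf_le ⟨hC, hx⟩

theorem riesz_abs_smul_le_s4 {E : Type*} [AddCommGroup E] [Lattice E] [Module ℝ E]
    [IsOrderedAddMonoid E] [PosSMulMono ℝ E] (t : ℝ) (z : E) : |t • z| ≤ |t| • |z| := by
  rcases le_total 0 t with h | h
  · rw [abs_of_nonneg h]
    apply abs_le'.2
    refine ⟨smul_le_smul_of_nonneg_left (le_abs_self z) h, ?_⟩
    rw [← smul_neg]
    exact smul_le_smul_of_nonneg_left (neg_le_abs z) h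
  · rw [abs_of_nonpos h]
    have h' : 0 ≤ -t := by linarith
    apply abs_le'.2
    refine ⟨?_, ?_⟩
    · rw [← neg_smul_neg]
      exact smul_le_smul_of_nonneg_left (neg_le_abs z) h'
    · rw [← neg_smul]
      exact smul_le_smul_of_nonneg_left (le_abs_self z) h'

/-- infinitesimals with respect to `y` -/
def infinitesimals {E : Type*} [AddCommGroup E] [Lattice E] [Module ℝ E]
    [IsOrderedAddMonoid E] [PosSMulMono ℝ E] (y : E) (hy : 0 ≤ y) : Submodule ℝ E where
  carrier := {z | ∀ c : ℝ, 0 < c → |z| ≤ c • y}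
  zero_mem' := by
    intro c hc
    simpa using smul_nonneg hc.le hy
  add_mem' := by
    intro a b ha hb c hc
    calc |a + b| ≤ |a| + |b| := abs_add_le a b
      _ ≤ (c/2) • y + (c/2) • y := add_le_add (ha _ (by positivity)) (hb _ (by positivity))
      _ = c • y := by rw [← add_smul]; congr 1; ring
  smul_mem' := by
    intro t z hz c hc
    have h1 : 0 < |t| + 1 := by positivity
    calc |t • z| ≤ |t| • |z| := riesz_abs_smul_le_s4 t z
      _ ≤ |t| • |z| + |z| := le_add_of_nonneg_right (abs_nonneg z)
      _ = (|t| + 1) • |z| := by rw [add_smul, one_smul]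
      _ ≤ (|t| + 1) • ((c / (|t| + 1)) • y) :=
          smul_le_smul_of_nonneg_left (hz _ (by positivity)) h1.le
      _ = c • y := by rw [smul_smul]; congr 1; field_simp

theorem lub_nonempty {E : Type*} [AddCommGroup E] [Lattice E]
    [IsOrderedAddMonoid E] {x s : E} (hx : x ≠ 0) {D : Set E} (hs : IsLUB D s) : D.Nonempty := by
  by_contra h
  rw [Set.not_nonempty_iff_eq_empty] at h
  subst h
  have h1 : ∀ z : E, s ≤ z := fun z => hs.2 (by simp [mem_upperBounds])
  have h2 : |x| ≤ 0 := by
    have := h1 (s - |x|)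
    simpa using this
  have h3 : |x| = 0 := le_antisymm h2 (abs_nonneg x)
  exact hx (riesz_abs_zero h3)

theorem infinitesimals_isBand {E : Type*} [AddCommGroup E] [Lattice E] [Module ℝ E]
    [IsOrderedAddMonoid E] [PosSMulMono ℝ E] (y : E) (hy : 0 ≤ y) (hy0 : y ≠ 0) :
    IsBand (infinitesimals y hy) := by
  refine ⟨fun a b hab hb c hc => hab.trans (hb c hc), ?_⟩
  intro D s hD hs c hc
  obtain ⟨d, hd⟩ := lub_nonempty hy0 hs
  apply abs_le'.2
  refine ⟨hs.2 fun d hd => (le_abs_self d).trans (hD hd c hc), ?_⟩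
  exact (neg_le_neg (hs.1 hd)).trans ((neg_le_abs d).trans (hD hd c hc))

theorem inf_add_le_riesz {E : Type*} [AddCommGroup E] [Lattice E]
    [IsOrderedAddMonoid E] {a b v : E} (ha : 0 ≤ a) (hb : 0 ≤ b) (hv : 0 ≤ v)
    (h1 : a ⊓ v = 0) (h2 : b ⊓ v = 0) : (a + b) ⊓ v = 0 := by
  apply le_antisymm _ (le_inf (add_nonneg ha hb) hv)
  have e : (a + b) ⊓ v ≤ a ⊓ v + b ⊓ v := by
    rw [inf_add, add_inf, add_inf]
    refine le_inf (le_inf inf_le_left ?_) (le_inf ?_ ?_)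
    · exact inf_le_right.trans (le_add_of_nonneg_left ha)
    · exact inf_le_right.trans (le_add_of_nonneg_right hb)
    · exact inf_le_right.trans (le_add_of_nonneg_right hv)
  simpa [h1, h2] using e

/-- disjoint complement of a positive element -/
def disjOf {E : Type*} [AddCommGroup E] [Lattice E] [Module ℝ E]
    [IsOrderedAddMonoid E] [PosSMulMono ℝ E] (v : E) (hv : 0 ≤ v) : Submodule ℝ E where
  carrier := {z | |z| ⊓ v = 0}
  zero_mem' := by simpa using hv
  add_mem' := by
    intro a b ha hb
    apply le_antisymm _ (le_inf (abs_nonneg _) hv)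
    rw [← inf_add_le_riesz (abs_nonneg a) (abs_nonneg b) hv ha hb]
    exact inf_le_inf_right v (abs_add_le a b)
  smul_mem' := by
    intro t z hz
    have hn : ∀ n : ℕ, ((n : ℝ) • |z|) ⊓ v = 0 := by
      intro n
      induction n with
      | zero => simpa using hv
      | succ k ih =>
        push_cast
        rw [add_smul, one_smul]
        exact inf_add_le_riesz (smul_nonneg (by positivity) (abs_nonneg z)) (abs_nonneg z) hv ih hz
    obtain ⟨n, hnt⟩ := exists_nat_ge |t|
    apply le_antisymm _ (le_inf (abs_nonneg _) hv)
    rw [← hn n]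
    apply inf_le_inf_right v
    refine (riesz_abs_smul_le_s4 t z).trans ?_
    have : 0 ≤ ((n : ℝ) - |t|) • |z| := smul_nonneg (by linarith) (abs_nonneg z)
    rw [sub_smul] at this
    exact sub_nonneg.1 this

theorem mem_disjOf_of_le {E : Type*} [AddCommGroup E] [Lattice E] [Module ℝ E]
    [IsOrderedAddMonoid E] [PosSMulMono ℝ E] (v : E) (hv : 0 ≤ v) (a b : E) (hab : |a| ≤ |b|)
    (hb : b ∈ disjOf v hv) : a ∈ disjOf v hv := by
  apply le_antisymm _ (le_inf (abs_nonneg _) hv)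
  have hb' : |b| ⊓ v = 0 := hb
  rw [← hb']
  exact inf_le_inf_right v hab

theorem disjOf_isBand {E : Type*} [AddCommGroup E] [Lattice E] [Module ℝ E]
    [IsOrderedAddMonoid E] [PosSMulMono ℝ E] (v : E) (hv : 0 ≤ v) (hv0 : v ≠ 0) :
    IsBand (disjOf v hv) := by
  refine ⟨mem_disjOf_of_le v hv, ?_⟩
  intro D s hD hs
  obtain ⟨d0, hd0⟩ := lub_nonempty hv0 hs
  have hneg : s⁻ ∈ disjOf v hv := by
    apply mem_disjOf_of_le v hv _ d0 _ (hD hd0)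
    rw [abs_of_nonneg (negPart_nonneg s)]
    refine (negPart_anti (hs.1 hd0)).trans ?_
    exact sup_le (neg_le_abs d0) (abs_nonneg d0)
  have hpos : s⁺ ∈ disjOf v hv := by
    change |s⁺| ⊓ v = 0
    rw [abs_of_nonneg (posPart_nonneg s)]
    apply le_antisymm _ (le_inf (posPart_nonneg s) hv)
    have hw0 : 0 ≤ s⁺ ⊓ v := le_inf (posPart_nonneg s) hv
    have hub : s ≤ s - s⁺ ⊓ v := by
      apply hs.2
      intro d hd
      have hds := hs.1 hd
      have h1 : d⁺ ⊓ (s⁺ ⊓ v) = 0 := by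
        apply le_antisymm _ (le_inf (posPart_nonneg d) hw0)
        have hd' : |d| ⊓ v = 0 := hD hd
        rw [← hd']
        exact inf_le_inf (sup_le (le_abs_self d) (abs_nonneg d)) inf_le_right
      have h2 : d⁺ + s⁺ ⊓ v ≤ s⁺ := by
        rw [← inf_add_sup d⁺ (s⁺ ⊓ v), h1, zero_add]
        exact sup_le (posPart_mono hds) inf_le_left
      have h3 : s⁻ ≤ d⁻ := negPart_anti hds
      rw [le_sub_iff_add_le]
      calc d + s⁺ ⊓ v = (d⁺ + s⁺ ⊓ v) - d⁻ := by
            nth_rewrite 1 [← posPart_sub_negPart d]; abel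
        _ ≤ s⁺ - s⁻ := sub_le_sub h2 h3
        _ = s := posPart_sub_negPart s
    simpa using hub
  rw [← posPart_sub_negPart s]
  exact Submodule.sub_mem _ hpos hneg

/-- A Riesz space of dimension at least `2` contains a nontrivial principal band. -/
theorem stmt4 {E : Type*} [AddCommGroup E] [Lattice E] [Module ℝ E]
    (hadd : ∀ x y z : E, x ≤ y → x + z ≤ y + z)
    (hsmul : ∀ (c : ℝ) (x : E), 0 ≤ c → 0 ≤ x → 0 ≤ c • x)
    (hdim : 2 ≤ Module.rank ℝ E) :
    ∃ B : Submodule ℝ E, IsPrincipalBand B ∧ B ≠ ⊥ ∧ B ≠ ⊤ := by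
  have : IsOrderedAddMonoid E :=
    { add_le_add_left := fun a b h c => hadd a b c h }
  have : PosSMulMono ℝ E := ⟨fun c hc a b hab => by
    have := hsmul c (b - a) hc (sub_nonneg.2 hab)
    rw [smul_sub] at this
    exact sub_nonneg.1 this⟩
  by_cases hA : ∃ x y : E, x ≠ 0 ∧ ∀ c : ℝ, 0 < c → |x| ≤ c • y
  · obtain ⟨x, y, hx, h⟩ := hA
    have hy : 0 ≤ y := by
      have := h 1 one_pos
      rw [one_smul] at this
      exact (abs_nonneg x).trans this
    have hy0 : y ≠ 0 := by
      rintro rfl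
      have h1 := h 1 one_pos
      rw [smul_zero] at h1
      have h3 : |x| = 0 := le_antisymm h1 (abs_nonneg x)
      exact hx (riesz_abs_zero h3)
    refine exists_principal (infinitesimals y hy) (infinitesimals_isBand y hy hy0) ?_ x h hx
    intro hT
    have hm : y ∈ infinitesimals y hy := by rw [hT]; trivial
    have h1 : |y| ≤ (1/2 : ℝ) • y := hm _ (by norm_num)
    rw [abs_of_nonneg hy] at h1
    have h2 : (1/2 : ℝ) • y + (1/2 : ℝ) • y ≤ (1/2 : ℝ) • y := by
      rw [← add_smul]; norm_num; simpa using h1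
    have h3 : (1/2 : ℝ) • y ≤ 0 := by simpa using h2
    have h4 : y ≤ 0 := h1.trans h3
    exact hy0 (le_antisymm h4 hy)
  by_cases hB : ∃ u : E, ¬ 0 ≤ u ∧ ¬ u ≤ 0
  · obtain ⟨u, h1, h2⟩ := hB
    have hp : u⁺ ≠ 0 := fun h => h2 (posPart_eq_zero.1 h)
    have hn : u⁻ ≠ 0 := fun h => h1 (negPart_eq_zero.1 h)
    refine exists_principal (disjOf u⁻ (negPart_nonneg u)) (disjOf_isBand _ _ hn) ?_ u⁺ ?_ hp
    · intro hT
      have hm : u⁻ ∈ disjOf u⁻ (negPart_nonneg u) := by rw [hT]; trivial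
      have hm' : |u⁻| ⊓ u⁻ = 0 := hm
      rw [abs_of_nonneg (negPart_nonneg u), inf_idem] at hm'
      exact hn hm'
    · change |u⁺| ⊓ u⁻ = 0
      rw [abs_of_nonneg (posPart_nonneg u)]
      exact posPart_inf_negPart_eq_zero u
  exfalso
  push Not at hA hB
  have htot : ∀ a b : E, ¬ a ≤ b → b ≤ a := by
    intro a b h
    have := hB (b - a) (fun h' => h (sub_nonneg.1 h'))
    exact sub_nonpos.1 this
  have hle : Module.rank ℝ E ≤ 1 := by
    rw [rank_le_one_iff]
    by_cases hE : ∃ e : E, e ≠ 0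
    swap
    · push Not at hE
      exact ⟨0, fun v => ⟨0, by simp [hE v]⟩⟩
    obtain ⟨e', he'⟩ := hE
    obtain ⟨e, he, he0⟩ : ∃ e : E, 0 ≤ e ∧ e ≠ 0 :=
      ⟨|e'|, abs_nonneg e', fun h => he' (riesz_abs_zero h)⟩
    have smono : ∀ a b : ℝ, a ≤ b → a • e ≤ b • e := by
      intro a b hab
      have := smul_nonneg (sub_nonneg.2 hab) he
      rw [sub_smul] at this
      exact sub_nonneg.1 this
    have hneg : ∀ a b : ℝ, a • e ≤ b • e → a ≤ b := by
      intro a b hab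
      by_contra hlt
      push Not at hlt
      have h1 : (a - b) • e ≤ 0 := by rw [sub_smul]; exact sub_nonpos.2 hab
      have h2 := smul_le_smul_of_nonneg_left h1 (inv_nonneg.2 (sub_pos.2 hlt).le)
      rw [smul_smul, inv_mul_cancel₀ (sub_pos.2 hlt).ne', one_smul, smul_zero] at h2
      exact he0 (le_antisymm h2 he)
    have harch : ∀ x : E, ∃ t : ℝ, x ≤ t • e := by
      intro x
      by_contra hcon
      push Not at hcon
      obtain ⟨c, hc, hcx⟩ := hA e x he0
      apply hcx
      rw [abs_of_nonneg he]
      have h1 := htot _ _ (hcon c⁻¹)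
      have h2 := smul_le_smul_of_nonneg_left h1 hc.le
      rwa [smul_smul, mul_inv_cancel₀ hc.ne', one_smul] at h2
    refine ⟨e, fun x => ?_⟩
    obtain ⟨T, hT⟩ := harch x
    obtain ⟨T', hT'⟩ := harch (-x)
    have hne : {t : ℝ | t • e ≤ x}.Nonempty := ⟨-T', by
      change (-T') • e ≤ x
      rw [neg_smul]; exact neg_le.1 hT'⟩
    have hbd : BddAbove {t : ℝ | t • e ≤ x} := ⟨T, fun t ht => hneg _ _ (le_trans ht hT)⟩
    refine ⟨sSup {t : ℝ | t • e ≤ x}, ?_⟩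
    set c := sSup {t : ℝ | t • e ≤ x} with hcdef
    by_contra hcon
    obtain ⟨ε, hε, hnot⟩ := hA (x - c • e) e (sub_ne_zero.2 (Ne.symm hcon))
    apply hnot
    apply abs_le'.2
    constructor
    · rw [sub_le_iff_le_add, ← add_smul]
      apply htot
      intro hmem
      have := le_csSup hbd hmem
      linarith
    · obtain ⟨t, ht, hlt⟩ := exists_lt_of_lt_csSup hne (show c - ε < c by linarith)
      have h1 : (c - ε) • e ≤ x := (smono _ _ hlt.le).trans ht
      rw [sub_smul] at h1
      rw [neg_sub]
      exact sub_le_comm.1 h1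
  have : (2 : Cardinal) ≤ 1 := hdim.trans hle
  norm_num at this
end

section
/- Let G be a finite group, E an Archimedean Riesz space, ρ : G → Aut⁺(E) a positive representation, and B' ⊆ E a nonzero principal band. Then there exists a nonzero principal band B ⊆ B' such that for every t ∈ G, either B ∩ ρ_t(B) = {0} or ρ_t(B) = B. -/
section Helpers

variable {E : Type*} [AddCommGroup E] [Lattice E] [IsOrderedAddMonoid E] [Module ℝ E]

theorem aux_abs_zero {z : E} (h : |z| = 0) : z = 0 :=
  le_antisymm (h ▸ le_abs_self z) (neg_nonpos.mp (h ▸ neg_le_abs z))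

theorem aux_add_disj {p q c : E} (hp : 0 ≤ p) (hq : 0 ≤ q) (hc : 0 ≤ c) (h1 : p ⊓ c = 0)
    (h2 : q ⊓ c = 0) : (p + q) ⊓ c = 0 := by
  apply le_antisymm _ (le_inf (add_nonneg hp hq) hc)
  have ha : (p + q) ⊓ c - q ≤ p := by
    rw [sub_le_iff_le_add]; exact inf_le_left
  have hb : (p + q) ⊓ c - q ≤ c := (sub_le_self _ hq).trans inf_le_right
  have hd : (p + q) ⊓ c - q ≤ 0 := h1 ▸ le_inf ha hb
  have he : (p + q) ⊓ c ≤ q := sub_nonpos.mp hd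
  exact h2 ▸ le_inf he inf_le_right

theorem aux_mono_disj {p q c : E} (hp : 0 ≤ p) (hpq : p ≤ q) (hc : 0 ≤ c) (h : q ⊓ c = 0) :
    p ⊓ c = 0 :=
  le_antisymm (h ▸ inf_le_inf_right c hpq) (le_inf hp hc)

theorem aux_nsmul_disj {p c : E} (hp : 0 ≤ p) (hc : 0 ≤ c) (h : p ⊓ c = 0) (n : ℕ) :
    (n • p) ⊓ c = 0 := by
  induction n with
  | zero => simpa using hc
  | succ n ih => rw [succ_nsmul]; exact aux_add_disj (nsmul_nonneg hp n) hp hc ih h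

theorem aux_abs_smul (hsmul : ∀ (c : ℝ) (x : E), 0 ≤ c → 0 ≤ x → 0 ≤ c • x) (r : ℝ) (x : E) :
    ∃ n : ℕ, |r • x| ≤ n • |x| := by
  have key : ∀ (r : ℝ) (x : E), r • x ≤ |r| • |x| := by
    intro r x
    rcases le_total 0 r with h | h
    · rw [abs_of_nonneg h, ← sub_nonneg, ← smul_sub]
      exact hsmul _ _ h (sub_nonneg.mpr (le_abs_self x))
    · have h3 : 0 ≤ (-r) • (|x| + x) :=
        hsmul _ _ (neg_nonneg.mpr h) (neg_le_iff_add_nonneg.mp (neg_le_abs x))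
      rw [abs_of_nonpos h, ← sub_nonneg]
      have : (-r) • |x| - r • x = (-r) • (|x| + x) := by module
      rw [this]; exact h3
  obtain ⟨n, hn⟩ := exists_nat_ge |r|
  refine ⟨n, ?_⟩
  have h1 : |r| • |x| ≤ n • |x| := by
    rw [← Nat.cast_smul_eq_nsmul ℝ, ← sub_nonneg, ← sub_smul]
    exact hsmul _ _ (sub_nonneg.mpr hn) (abs_nonneg x)
  refine le_trans (abs_le'.mpr ⟨key r x, ?_⟩) h1
  have := key (-r) x
  rwa [abs_neg, neg_smul] at this

/-- Disjoint complement of a single element, as a submodule. -/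
def auxCompl (hsmul : ∀ (c : ℝ) (x : E), 0 ≤ c → 0 ≤ x → 0 ≤ c • x) (y : E) :
    Submodule ℝ E where
  carrier := {x | |x| ⊓ |y| = 0}
  zero_mem' := by simp
  add_mem' := by
    intro a b ha hb
    exact aux_mono_disj (abs_nonneg _) (abs_add_le a b) (abs_nonneg _)
      (aux_add_disj (abs_nonneg _) (abs_nonneg _) (abs_nonneg _) ha hb)
  smul_mem' := by
    intro r x hx
    obtain ⟨n, hn⟩ := aux_abs_smul hsmul r x
    exact aux_mono_disj (abs_nonneg _) hn (abs_nonneg _)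
      (aux_nsmul_disj (abs_nonneg _) (abs_nonneg _) hx n)

theorem aux_mem_compl (hsmul : ∀ (c : ℝ) (x : E), 0 ≤ c → 0 ≤ x → 0 ≤ c • x) (x y : E) :
    x ∈ auxCompl hsmul y ↔ |x| ⊓ |y| = 0 := Iff.rfl

theorem aux_compl_band (hsmul : ∀ (c : ℝ) (x : E), 0 ≤ c → 0 ≤ x → 0 ≤ c • x) (y : E) :
    IsBand (auxCompl hsmul y) := by
  refine ⟨fun x z hxz hz => aux_mono_disj (abs_nonneg _) hxz (abs_nonneg _) hz, ?_⟩
  intro D x hD hx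
  have hpos : (x ⊔ 0) ⊓ |y| = 0 := by
    have hw0 : 0 ≤ (x ⊔ 0) ⊓ |y| := le_inf le_sup_right (abs_nonneg _)
    apply le_antisymm _ hw0
    have h1 : x ≤ (x ⊔ 0) - (x ⊔ 0) ⊓ |y| := by
      apply hx.2
      intro d hd
      have hdx : d ≤ x := hx.1 hd
      have h2 : (d ⊔ 0) ⊓ |y| = 0 :=
        aux_mono_disj le_sup_right (sup_le (le_abs_self d) (abs_nonneg d)) (abs_nonneg _) (hD hd)
      have h3 : (d ⊔ 0) ⊓ ((x ⊔ 0) ⊓ |y|) = 0 :=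
        le_antisymm ((inf_le_inf_left _ inf_le_right).trans h2.le) (le_inf le_sup_right hw0)
      have h4 : (d ⊔ 0) + ((x ⊔ 0) ⊓ |y|) = (d ⊔ 0) ⊔ ((x ⊔ 0) ⊓ |y|) := by
        rw [← inf_add_sup, h3, zero_add]
      rw [le_sub_iff_add_le]
      calc d + (x ⊔ 0) ⊓ |y| ≤ (d ⊔ 0) + (x ⊔ 0) ⊓ |y| := by gcongr; exact le_sup_left
        _ = _ := h4
        _ ≤ x ⊔ 0 := sup_le (sup_le_sup_right hdx 0) inf_le_left
    have h2 : x ⊔ 0 ≤ (x ⊔ 0) - (x ⊔ 0) ⊓ |y| := sup_le h1 (sub_nonneg.mpr inf_le_left)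
    simpa using h2
  have hneg : (-x ⊔ 0) ⊓ |y| = 0 := by
    rcases D.eq_empty_or_nonempty with h | ⟨d, hd⟩
    · subst h
      have : x ≤ x + x := hx.2 (by simp)
      have h0 : 0 ≤ x := by simpa using this
      rw [sup_eq_right.mpr (neg_nonpos.mpr h0)]
      simp
    · refine aux_mono_disj le_sup_right (sup_le ?_ (abs_nonneg d)) (abs_nonneg _) (hD hd)
      exact (neg_le_neg (hx.1 hd)).trans (neg_le_abs d)
  have : |x| ≤ (x ⊔ 0) + (-x ⊔ 0) :=
    abs_le'.mpr ⟨le_add_of_le_of_nonneg le_sup_left le_sup_right,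
      le_add_of_nonneg_of_le le_sup_right le_sup_left⟩
  exact aux_mono_disj (abs_nonneg _) this (abs_nonneg _)
    (aux_add_disj le_sup_right le_sup_right (abs_nonneg _) hpos hneg)

/-- The band generated by an element. -/
def auxGen (x : E) : Submodule ℝ E := sInf {C | IsBand C ∧ x ∈ C}

theorem aux_gen_mem (x : E) : x ∈ auxGen x := by
  simp only [auxGen, Submodule.mem_sInf]
  exact fun C hC => hC.2

theorem aux_gen_le {x : E} {C : Submodule ℝ E} (hC : IsBand C) (hx : x ∈ C) : auxGen x ≤ C :=
  sInf_le ⟨hC, hx⟩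

theorem aux_gen_band (x : E) : IsBand (auxGen x) := by
  constructor
  · intro a b hab hb
    simp only [auxGen, Submodule.mem_sInf] at hb ⊢
    exact fun C hC => hC.1.1 a b hab (hb C hC)
  · intro D a hD ha
    simp only [auxGen, Submodule.mem_sInf]
    exact fun C hC => hC.1.2 D a (fun d hd => aux_gen_le hC.1 hC.2 (hD hd)) ha

theorem aux_gen_disj (hsmul : ∀ (c : ℝ) (x : E), 0 ≤ c → 0 ≤ x → 0 ≤ c • x) {a b : E}
    (h : |a| ⊓ |b| = 0) : auxGen a ⊓ auxGen b = ⊥ := by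
  rw [eq_bot_iff]
  rintro z ⟨hza, hzb⟩
  have h1 : z ∈ auxCompl hsmul b := aux_gen_le (aux_compl_band hsmul b) h hza
  have h2 : b ∈ auxCompl hsmul z := by
    rw [aux_mem_compl] at h1 ⊢; rwa [inf_comm]
  have h3 : z ∈ auxCompl hsmul z := aux_gen_le (aux_compl_band hsmul z) h2 hzb
  rw [aux_mem_compl, inf_idem] at h3
  exact aux_abs_zero h3

theorem aux_comap_band (f : E ≃ₗ[ℝ] E) (hf : ∀ x y, x ≤ y ↔ f x ≤ f y) {C : Submodule ℝ E}
    (hC : IsBand C) : IsBand (C.comap f.toLinearMap) := by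
  let F : E ≃o E := ⟨f.toEquiv, fun {a b} => (hf a b).symm⟩
  have habs : ∀ x, f |x| = |f x| := by
    intro x
    have : F (x ⊔ -x) = F x ⊔ F (-x) := F.map_sup _ _
    change f (x ⊔ -x) = f x ⊔ f (-x) at this
    rw [map_neg] at this
    exact this
  constructor
  · intro x y hxy hy
    apply hC.1 (f x) (f y) _ hy
    rw [← habs, ← habs]
    exact (hf _ _).mp hxy
  · intro D x hD hx
    refine hC.2 (F '' D) (f x) ?_ ?_
    · rintro _ ⟨d, hd, rfl⟩
      exact hD hd
    · exact F.isLUB_image'.mpr hx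

theorem aux_map_gen (f : E ≃ₗ[ℝ] E) (hf : ∀ x y, x ≤ y ↔ f x ≤ f y) (a : E) :
    (auxGen a).map f.toLinearMap = auxGen (f a) := by
  apply le_antisymm
  · rw [Submodule.map_le_iff_le_comap]
    exact aux_gen_le (aux_comap_band f hf (aux_gen_band _)) (aux_gen_mem (f a))
  · have hs : ∀ x y, x ≤ y ↔ f.symm x ≤ f.symm y := by
      intro x y
      rw [hf (f.symm x)]; simp
    have := aux_comap_band f.symm hs (aux_gen_band a)
    intro z hz
    have h2 := aux_gen_le this (x := f a) (by simpa using aux_gen_mem a) hz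
    exact ⟨f.symm z, h2, by simp⟩

end Helpers

/-- Given a positive representation `ρ` of a finite group `G` in an Archimedean Riesz
space `E` and a nonzero principal band `B' ⊆ E`, there is a nonzero principal band
`B ⊆ B'` such that for every `t ∈ G` either `B ∩ ρ_t(B) = {0}` or `ρ_t(B) = B`. -/
theorem stmt6 {G E : Type*} [Group G] [Finite G] [AddCommGroup E] [Lattice E] [Module ℝ E]
    (hadd : ∀ x y z : E, x ≤ y → x + z ≤ y + z)
    (hsmul : ∀ (c : ℝ) (x : E), 0 ≤ c → 0 ≤ x → 0 ≤ c • x)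
    (harch : RieszArchimedean E)
    (ρ : G →* (E ≃ₗ[ℝ] E)) (hρ : IsPositiveRep ρ)
    (B' : Submodule ℝ E) (hB' : IsPrincipalBand B') (hB'0 : B' ≠ ⊥) :
    ∃ B : Submodule ℝ E, IsPrincipalBand B ∧ B ≠ ⊥ ∧ B ≤ B' ∧
      ∀ t : G, B ⊓ B.map (ρ t).toLinearMap = ⊥ ∨ B.map (ρ t).toLinearMap = B := by
  classical
  have : IsOrderedAddMonoid E := { add_le_add_left := fun a b h c => hadd a b c h }
  obtain ⟨b, hb, hb0⟩ := Submodule.exists_mem_ne_zero_of_ne_bot hB'0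
  set a : E := |b| with ha
  have ha0 : 0 ≤ a := abs_nonneg b
  have hane : a ≠ 0 := fun h => hb0 (aux_abs_zero h)
  have haB : a ∈ B' := hB'.1.1 a b (by simp [ha]) hb
  have hpos : ∀ s, 0 ≤ ρ s a := fun s => by
    have := (hρ s 0 a).mp ha0
    simpa using this
  have := Fintype.ofFinite G
  let P : Finset G → Prop := fun S => (1 : G) ∈ S ∧ ∃ h : S.Nonempty, S.inf' h (fun s => ρ s a) ≠ 0
  obtain ⟨S, hS, hmax⟩ := Finset.exists_max_image (Finset.univ.filter P) Finset.card
    ⟨{1}, by simp [P, hane]⟩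
  obtain ⟨h1S, hne, hS0⟩ : P S := (Finset.mem_filter.mp hS).2
  set x : E := S.inf' hne (fun s => ρ s a) with hx
  have hx0 : 0 ≤ x := Finset.le_inf' _ _ fun s _ => hpos s
  have hxa : x ≤ a := by
    have : x ≤ ρ 1 a := Finset.inf'_le _ h1S
    simpa using this
  have hxB : x ∈ B' := hB'.1.1 x a (by rwa [abs_of_nonneg hx0, abs_of_nonneg ha0]) haB
  refine ⟨auxGen x, ⟨aux_gen_band x, x, aux_gen_mem x, fun C hC hxC => aux_gen_le hC hxC⟩, ?_,
    aux_gen_le hB'.1 hxB, ?_⟩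
  · intro h
    have := aux_gen_mem x
    rw [h] at this
    exact hS0 (by simpa using this)
  intro t
  rw [aux_map_gen (ρ t) (hρ t)]
  let T : Finset G := S.image (fun s => t * s)
  have hT : T.Nonempty := hne.image _
  have htx : ρ t x = T.inf' hT (fun s => ρ s a) := by
    let F : E ≃o E := ⟨(ρ t).toEquiv, fun {a b} => (hρ t a b).symm⟩
    have h1 : F x = S.inf' hne (fun s => F (ρ s a)) :=
      map_finset_inf' F hne _
    have h2 : T.inf' hT (fun s => ρ s a) = S.inf' hne (fun s => ρ (t * s) a) :=
      Finset.inf'_image _ _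
    rw [h2]
    change ρ t x = S.inf' hne (fun s => ρ t (ρ s a)) at h1
    rw [h1]
    simp [map_mul]
  have htx0 : 0 ≤ ρ t x := by
    have := (hρ t 0 x).mp hx0
    simpa using this
  by_cases hST : T = S
  · right
    have : ρ t x = x := by
      rw [htx]
      simp only [hST, hx]
    rw [this]
  · left
    apply aux_gen_disj hsmul
    rw [abs_of_nonneg hx0, abs_of_nonneg htx0]
    by_contra hcon
    have hU : P (S ∪ T) := by
      refine ⟨Finset.mem_union_left _ h1S, hne.mono Finset.subset_union_left, ?_⟩
      rw [Finset.inf'_union hne hT, ← htx]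
      exact hcon
    have hcard := hmax (S ∪ T) (by simpa using hU)
    have h1 : S = S ∪ T := Finset.eq_of_subset_of_card_le Finset.subset_union_left hcard
    have h2 : T ⊆ S := by rw [h1]; exact Finset.subset_union_right
    apply hST
    apply Finset.eq_of_subset_of_card_le h2
    rw [Finset.card_image_of_injective _ (mul_right_injective t)]
end

section
/- Let G be a finite group, E a nonzero Riesz space, and ρ : G → Aut⁺(E) a positive representation that is principal band irreducible. Then E is Archimedean, E is finite dimensional as a real vector space, and the dimension of E divides the order of G. -/
namespace RieszAux

section basic
variable {E : Type*} [AddCommGroup E] [Lattice E] [IsOrderedAddMonoid E]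

lemma inf_add_le_add {y a b : E} (hy : 0 ≤ y) (ha : 0 ≤ a) (hb : 0 ≤ b) :
    y ⊓ (a + b) ≤ y ⊓ a + y ⊓ b := by
  have h0 : 0 ≤ y ⊓ a := le_inf hy ha
  have h1 : y ⊓ (a + b) ≤ y ⊓ a + b := by
    rw [inf_add]
    exact le_inf (inf_le_left.trans (le_add_of_nonneg_right hb)) inf_le_right
  rw [add_inf]
  exact le_inf (inf_le_left.trans (le_add_of_nonneg_left h0)) h1

lemma disj_add {y a b : E} (hy : 0 ≤ y) (ha : 0 ≤ a) (hb : 0 ≤ b)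
    (h1 : y ⊓ a = 0) (h2 : y ⊓ b = 0) : y ⊓ (a + b) = 0 := by
  apply le_antisymm
  · have := inf_add_le_add hy ha hb
    rwa [h1, h2, add_zero] at this
  · exact le_inf hy (add_nonneg ha hb)

lemma disj_nsmul {y a : E} (hy : 0 ≤ y) (ha : 0 ≤ a) (h1 : y ⊓ a = 0) (n : ℕ) :
    y ⊓ (n • a) = 0 := by
  induction n with
  | zero => simpa using hy
  | succ k ih => rw [succ_nsmul]; exact disj_add hy (nsmul_nonneg ha k) ha ih h1

lemma disj_sum {ι : Type*} {y : E} (hy : 0 ≤ y) (s : Finset ι) (f : ι → E)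
    (hf : ∀ i ∈ s, 0 ≤ f i) (h : ∀ i ∈ s, y ⊓ f i = 0) : y ⊓ (∑ i ∈ s, f i) = 0 := by
  classical
  induction s using Finset.induction_on with
  | empty => simpa using hy
  | insert a s ha ih =>
    rw [Finset.sum_insert ha]
    simp only [Finset.mem_insert, forall_eq_or_imp] at hf h
    exact disj_add hy hf.1 (Finset.sum_nonneg hf.2) h.1 (ih hf.2 h.2)

lemma disj_mono {y a b : E} (hy : 0 ≤ y) (ha : 0 ≤ a) (hab : a ≤ b) (h : y ⊓ b = 0) :
    y ⊓ a = 0 :=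
  le_antisymm (h ▸ inf_le_inf_left y hab) (le_inf hy ha)

lemma sum_le_of_disj {ι : Type*} (s : Finset ι) (f : ι → E) (x : E) (hx : 0 ≤ x)
    (hf : ∀ i ∈ s, 0 ≤ f i) (hle : ∀ i ∈ s, f i ≤ x)
    (h : ∀ i ∈ s, ∀ j ∈ s, i ≠ j → f i ⊓ f j = 0) : ∑ i ∈ s, f i ≤ x := by
  classical
  induction s using Finset.induction_on with
  | empty => simpa using hx
  | insert a s ha ih =>
    rw [Finset.sum_insert ha]
    have h1 : f a ⊓ ∑ i ∈ s, f i = 0 := by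
      apply disj_sum (hf a (by simp)) s f (fun i hi => hf i (by simp [hi]))
      intro i hi
      exact h a (by simp) i (by simp [hi]) (by rintro rfl; exact ha hi)
    rw [← inf_add_sup, h1, zero_add]
    refine sup_le (hle a (by simp)) (ih ?_ ?_ ?_)
    · exact fun i hi => hf i (by simp [hi])
    · exact fun i hi => hle i (by simp [hi])
    · exact fun i hi j hj => h i (by simp [hi]) j (by simp [hj])

/-- membership in the principal band of `e ≥ 0` -/
def P (e x : E) : Prop := ∀ z, (∀ n : ℕ, |x| ⊓ n • e ≤ z) → |x| ≤ z

lemma P_ideal {e x y : E} (h : |x| ≤ |y|) (hy : P e y) : P e x := by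
  intro z hz
  have : |y| ≤ z + |y| - |x| := by
    apply hy
    intro n
    have h1 : |y| ⊓ n • e + |x| ≤ |x| ⊓ n • e + |y| := by
      rw [inf_add, inf_add]
      refine le_inf (by rw [add_comm]; exact inf_le_left) ?_
      exact inf_le_right.trans (add_le_add_right h _)
    rw [le_sub_iff_add_le]
    exact h1.trans (add_le_add_left (hz n) _)
  rw [le_sub_iff_add_le, add_comm] at this
  exact le_of_add_le_add_right this

lemma P_add {e x y : E} (he : 0 ≤ e) (hx : P e x) (hy : P e y) : P e (x + y) := by
  have key : P e (|x| + |y|) := by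
    intro z hz
    have habs : |(|x| + |y|)| = |x| + |y| := abs_of_nonneg (add_nonneg (abs_nonneg x) (abs_nonneg y))
    rw [habs] at hz ⊢
    have h1 : ∀ n m : ℕ, |x| ⊓ n • e + |y| ⊓ m • e ≤ z := by
      intro n m
      refine le_trans (le_inf ?_ ?_) (hz (n + m))
      · exact add_le_add inf_le_left inf_le_left
      · rw [add_nsmul]; exact add_le_add inf_le_right inf_le_right
    have h2 : ∀ m : ℕ, |x| ≤ z - |y| ⊓ m • e := by
      intro m
      exact hx _ fun n => le_sub_iff_add_le.2 (h1 n m)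
    have h3 : |y| ≤ z - |x| := hy _ fun m => by
      have := h2 m
      rw [le_sub_iff_add_le] at this ⊢
      rwa [add_comm]
    rw [le_sub_iff_add_le, add_comm] at h3
    exact h3
  refine P_ideal ?_ key
  rw [abs_of_nonneg (add_nonneg (abs_nonneg x) (abs_nonneg y))]
  exact abs_add_le x y

lemma P_zero (e : E) (he : 0 ≤ e) : P e 0 := by
  intro z hz
  simpa using hz 0

lemma P_self (e : E) (he : 0 ≤ e) : P e e := by
  intro z hz
  simpa [abs_of_nonneg he] using hz 1

lemma P_nsmul {e x : E} (he : 0 ≤ e) (hx : P e x) (n : ℕ) : P e (n • x) := by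
  induction n with
  | zero => simpa using P_zero e he
  | succ k ih => rw [succ_nsmul]; exact P_add he ih hx

lemma P_sup [Nontrivial E] {e : E} (he : 0 ≤ e) (D : Set E) (x : E) (hD : ∀ d ∈ D, P e d)
    (hx : IsLUB D x) : P e x := by
  have hne : D.Nonempty := by
    by_contra hcon
    rw [Set.not_nonempty_iff_eq_empty] at hcon
    subst hcon
    have hb : IsBot x := isLUB_empty_iff.1 hx
    obtain ⟨a, ha⟩ := exists_ne (0 : E)
    have h1 : 0 ≤ a := by
      have := hb (x + a)
      simpa using this
    have h2 : a ≤ 0 := by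
      have := hb (x - a)
      simpa using this
    exact ha (le_antisymm h2 h1)
  obtain ⟨d, hd⟩ := hne
  have hneg : P e (x⁻) := by
    refine P_ideal ?_ (hD d hd)
    rw [abs_of_nonneg (negPart_nonneg x)]
    refine le_trans (negPart_anti (hx.1 hd)) ?_
    rw [← posPart_add_negPart]
    exact le_add_of_nonneg_left (posPart_nonneg d)
  have hpos : P e (x⁺) := by
    intro z hz
    rw [abs_of_nonneg (posPart_nonneg x)] at hz ⊢
    have hz0 : 0 ≤ z := by
      have := hz 0
      rw [zero_nsmul] at this
      exact (le_inf (posPart_nonneg x) le_rfl).trans this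
    rw [posPart_def]
    refine sup_le ?_ hz0
    refine hx.2 ?_
    intro c hc
    have hc' : P e (c⁺) := by
      refine P_ideal ?_ (hD c hc)
      rw [abs_of_nonneg (posPart_nonneg c), ← posPart_add_negPart]
      exact le_add_of_nonneg_right (negPart_nonneg c)
    have : |c⁺| ≤ z := by
      apply hc'
      intro n
      rw [abs_of_nonneg (posPart_nonneg c)]
      exact (inf_le_inf_right _ (posPart_mono (hx.1 hc))).trans (hz n)
    exact (le_posPart c).trans ((le_abs_self _).trans this)
  have := P_add he hpos hneg
  refine P_ideal ?_ this
  rw [posPart_add_negPart, abs_abs]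

end basic

section real
variable {E : Type*} [AddCommGroup E] [Lattice E] [IsOrderedAddMonoid E] [Module ℝ E]
  [PosSMulMono ℝ E]

lemma smul_mono_left {c d : ℝ} {x : E} (h : c ≤ d) (hx : 0 ≤ x) : c • x ≤ d • x := by
  have : 0 ≤ (d - c) • x := smul_nonneg (sub_nonneg.2 h) hx
  rw [sub_smul] at this
  exact sub_nonneg.1 this

lemma smul_le_abs (c : ℝ) (x : E) : c • x ≤ |c| • |x| := by
  rcases le_total 0 c with h | h
  · rw [abs_of_nonneg h]
    exact smul_le_smul_of_nonneg_left (le_abs_self x) h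
  · rw [abs_of_nonpos h, ← neg_smul_neg]
    exact smul_le_smul_of_nonneg_left (neg_le_abs x) (neg_nonneg.2 h)

lemma abs_smul_le (c : ℝ) (x : E) (n : ℕ) (hn : |c| ≤ n) : |c • x| ≤ n • |x| := by
  rw [← Nat.cast_smul_eq_nsmul ℝ]
  have h := smul_mono_left hn (abs_nonneg x)
  refine abs_le'.2 ⟨(smul_le_abs c x).trans h, ?_⟩
  rw [← neg_smul]
  refine (smul_le_abs (-c) x).trans ?_
  rwa [abs_neg]

/-- the principal band generated by `e` -/
def band (e : E) (he : 0 ≤ e) : Submodule ℝ E where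
  carrier := {x | P e x}
  zero_mem' := P_zero e he
  add_mem' := fun ha hb => P_add he ha hb
  smul_mem' := by
    intro c x hx
    obtain ⟨n, hn⟩ := exists_nat_ge |c|
    have habs : P e |x| := P_ideal (by rw [abs_abs]) hx
    refine P_ideal ?_ (P_nsmul he habs n)
    rw [abs_of_nonneg (nsmul_nonneg (abs_nonneg x) n)]
    exact abs_smul_le c x n hn

lemma disj_smul {y a : E} (hy : 0 ≤ y) (ha : 0 ≤ a) (h : y ⊓ a = 0) {t : ℝ} (ht : 0 ≤ t) :
    y ⊓ t • a = 0 := by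
  obtain ⟨n, hn⟩ := exists_nat_ge t
  refine disj_mono hy (smul_nonneg ht ha) ?_ (disj_nsmul hy ha h n)
  rw [← Nat.cast_smul_eq_nsmul ℝ]
  exact smul_mono_left hn ha

lemma arch_le (A : RieszArchimedean E) {a b : E} (hb : 0 ≤ b)
    (h : ∀ ε : ℝ, 0 < ε → a ≤ ε • b) : a ≤ 0 := by
  have : a⁺ = 0 := by
    apply A _ b
    intro n hn
    refine ⟨nsmul_nonneg (posPart_nonneg a) n, ?_⟩
    have hn' : (0:ℝ) < n := by exact_mod_cast hn
    have h1 : a⁺ ≤ (n:ℝ)⁻¹ • b := by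
      rw [posPart_def]
      exact sup_le (h _ (by positivity)) (smul_nonneg (by positivity) hb)
    rw [← Nat.cast_smul_eq_nsmul ℝ]
    have := smul_le_smul_of_nonneg_left h1 hn'.le
    rwa [smul_smul, mul_inv_cancel₀ hn'.ne', one_smul] at this
  exact posPart_eq_zero.1 this

lemma exists_max (A : RieszArchimedean E) {x y : E} (hy : 0 ≤ y) (hy0 : y ≠ 0) (hx : 0 ≤ x) :
    ∃ c : ℝ, 0 ≤ c ∧ c • y ≤ x ∧ ∀ t : ℝ, t • y ≤ x → t ≤ c := by
  set S := {t : ℝ | t • y ≤ x} with hS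
  have h0 : (0:ℝ) ∈ S := by simpa [hS] using hx
  have hbdd : BddAbove S := by
    by_contra hcon
    apply hy0
    apply A y x
    intro n hn
    refine ⟨nsmul_nonneg hy n, ?_⟩
    rw [not_bddAbove_iff] at hcon
    obtain ⟨t, ht, hnt⟩ := hcon n
    rw [← Nat.cast_smul_eq_nsmul ℝ]
    exact (smul_mono_left hnt.le hy).trans ht
  refine ⟨sSup S, le_csSup hbdd h0, ?_, fun t ht => le_csSup hbdd ht⟩
  rw [← sub_nonpos]
  apply arch_le A hy
  intro ε hε
  obtain ⟨t, ht, htS⟩ := exists_lt_of_lt_csSup ⟨0, h0⟩ (sub_lt_self (sSup S) hε)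
  have h1 : (sSup S) • y ≤ (t + ε) • y := smul_mono_left (by linarith) hy
  rw [add_smul] at h1
  rw [sub_le_iff_le_add']
  exact h1.trans (add_le_add_left ht _)

def Atom (y : E) : Prop := 0 ≤ y ∧ y ≠ 0 ∧
  ∀ a b : E, 0 ≤ a → a ≤ y → 0 ≤ b → b ≤ y → a ⊓ b = 0 → a = 0 ∨ b = 0

lemma Atom.eq_smul (A : RieszArchimedean E) {y z : E} (hy : Atom y) (hz : 0 ≤ z) (hzy : z ≤ y) :
    ∃ c : ℝ, 0 ≤ c ∧ z = c • y := by
  obtain ⟨hy1, hy2, hy3⟩ := hy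
  obtain ⟨c, hc0, hcz, hmax⟩ := exists_max A hy1 hy2 hz
  refine ⟨c, hc0, le_antisymm ?_ hcz⟩
  rw [← sub_nonpos]
  apply arch_le A hy1
  intro ε hε
  rw [sub_le_iff_le_add', ← add_smul]
  rcases le_total 1 (c + ε) with h | h
  · refine hzy.trans ?_
    have := smul_mono_left h hy1
    rwa [one_smul] at this
  · have ht0 : 0 ≤ (c + ε) • y := smul_nonneg (by linarith) hy1
    have hty : (c + ε) • y ≤ y := by
      have := smul_mono_left h hy1
      rwa [one_smul] at this
    have hor := hy3 (z - (c + ε) • y)⁺ (z - (c + ε) • y)⁻ (posPart_nonneg _) ?_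
      (negPart_nonneg _) ?_ (posPart_inf_negPart_eq_zero _)
    · rcases hor with h1 | h1
      · exact sub_nonpos.1 (posPart_eq_zero.1 h1)
      · have := hmax _ (sub_nonneg.1 (negPart_eq_zero.1 h1))
        linarith
    · rw [posPart_def]
      exact sup_le ((sub_le_self _ ht0).trans hzy) hy1
    · rw [negPart_def]
      refine sup_le ?_ hy1
      rw [neg_sub]
      exact (sub_le_self _ hz).trans hty

lemma linInd (s : Set E) (hpos : ∀ o ∈ s, 0 ≤ o ∧ o ≠ 0)
    (hd : ∀ o ∈ s, ∀ o' ∈ s, o ≠ o' → o ⊓ o' = 0) : LinearIndepOn ℝ id s := by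
  classical
  rw [linearIndepOn_iff']
  have key : ∀ (t : Finset E) (g : E → ℝ), (t : Set E) ⊆ s → ∑ i ∈ t, g i • i = 0 →
      ∀ i ∈ t, g i ≤ 0 := by
    intro t g hts hsum i hi
    by_contra! hgi
    obtain ⟨hi0, hi1⟩ := hpos i (hts hi)
    rw [← Finset.add_sum_erase t _ hi] at hsum
    have h1 : g i • i ≤ ∑ j ∈ t.erase i, |g j| • j := by
      rw [eq_neg_of_add_eq_zero_left hsum, ← Finset.sum_neg_distrib]
      apply Finset.sum_le_sum
      intro j hj
      rw [← neg_smul]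
      exact smul_mono_left (neg_le_abs _) (hpos j (hts (Finset.mem_of_mem_erase hj))).1
    have h2 : i ⊓ ∑ j ∈ t.erase i, |g j| • j = 0 := by
      apply disj_sum hi0
      · intro j hj
        exact smul_nonneg (abs_nonneg _) (hpos j (hts (Finset.mem_of_mem_erase hj))).1
      · intro j hj
        have hjs := hts (Finset.mem_of_mem_erase hj)
        exact disj_smul hi0 (hpos j hjs).1
          (hd i (hts hi) j hjs (Finset.ne_of_mem_erase hj).symm) (abs_nonneg _)
    have hgi0 : 0 ≤ g i • i := smul_nonneg hgi.le hi0
    have h3 := disj_smul (hgi0.trans h1) hi0 (by rwa [inf_comm]) hgi.le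
    rw [inf_eq_right.2 h1] at h3
    rcases smul_eq_zero.1 h3 with h | h
    · exact hgi.ne' h
    · exact hi1 h
  intro t g hts hsum i hi
  apply le_antisymm (key t g hts hsum i hi)
  have := key t (fun i => - g i) hts (by simpa [Finset.sum_neg_distrib] using hsum) i hi
  simpa using this

end real

section rep
variable {E : Type*} [AddCommGroup E] [Lattice E] [IsOrderedAddMonoid E] [Module ℝ E]
  [PosSMulMono ℝ E] {G : Type*} [Group G] {ρ : G →* (E ≃ₗ[ℝ] E)}

lemma map_inf' (hρ : IsPositiveRep ρ) (g : G) (x y : E) : ρ g (x ⊓ y) = ρ g x ⊓ ρ g y :=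
  OrderIso.map_inf (⟨(ρ g).toEquiv, fun {a b} => (hρ g a b).symm⟩ : E ≃o E) x y

lemma map_sup' (hρ : IsPositiveRep ρ) (g : G) (x y : E) : ρ g (x ⊔ y) = ρ g x ⊔ ρ g y :=
  OrderIso.map_sup (⟨(ρ g).toEquiv, fun {a b} => (hρ g a b).symm⟩ : E ≃o E) x y

lemma map_abs' (hρ : IsPositiveRep ρ) (g : G) (x : E) : ρ g |x| = |ρ g x| := by
  simp only [abs, map_sup' hρ, map_neg]

lemma map_nonneg' (hρ : IsPositiveRep ρ) (g : G) {x : E} (hx : 0 ≤ x) : 0 ≤ ρ g x := by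
  have := (hρ g 0 x).1 hx
  rwa [map_zero] at this

lemma mul_app (g h : G) (x : E) : ρ g (ρ h x) = ρ (g * h) x := by simp

lemma inv_app (g : G) (x : E) : ρ g⁻¹ (ρ g x) = x := by rw [mul_app]; simp

lemma app_inv (g : G) (x : E) : ρ g (ρ g⁻¹ x) = x := by rw [mul_app]; simp

lemma Atom.map (hρ : IsPositiveRep ρ) {y : E} (hy : Atom y) (g : G) : Atom (ρ g y) := by
  obtain ⟨h1, h2, h3⟩ := hy
  refine ⟨map_nonneg' hρ g h1, by simpa using h2, ?_⟩
  intro a b ha hay hb hby hab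
  have := h3 (ρ g⁻¹ a) (ρ g⁻¹ b) (map_nonneg' hρ _ ha) ?_ (map_nonneg' hρ _ hb) ?_ ?_
  · simpa using this
  · rw [hρ g, app_inv]; exact hay
  · rw [hρ g, app_inv]; exact hby
  · rw [← map_inf' hρ, hab, map_zero]

lemma P_of_inv [Nontrivial E] (hρ : IsPositiveRep ρ) (hirr : PrincipalBandIrreducible ρ) {e : E}
    (he : 0 ≤ e) (he0 : e ≠ 0) (hinv : ∀ g, ρ g e = e) (x : E) : P e x := by
  have h := hirr (band e he) ⟨⟨fun x y hxy hy => P_ideal hxy hy,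
    fun D x hD hx => P_sup he D x hD hx⟩, e, P_self e he, ?_⟩ ?_
  · rcases h with h | h
    · exfalso
      have : e ∈ band e he := P_self e he
      rw [h] at this
      exact he0 (by simpa using this)
    · have : x ∈ band e he := by rw [h]; trivial
      exact this
  · intro C hC heC x hx
    have hne : ∀ n : ℕ, |x| ⊓ n • e ∈ C := by
      intro n
      refine hC.1 _ (n • e) ?_ (C.nsmul_mem heC n)
      rw [abs_of_nonneg (le_inf (abs_nonneg x) (nsmul_nonneg he n)),
        abs_of_nonneg (nsmul_nonneg he n)]
      exact inf_le_right
    have habs : |x| ∈ C := by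
      apply hC.2 (Set.range fun n : ℕ => |x| ⊓ n • e) |x|
      · rintro _ ⟨n, rfl⟩; exact hne n
      · constructor
        · rintro _ ⟨n, rfl⟩; exact inf_le_left
        · intro z hz
          exact hx z fun n => hz ⟨n, rfl⟩
    exact hC.1 _ |x| (by rw [abs_abs]) habs
  · intro g x hx z hz
    have h1 : |x| ≤ ρ g⁻¹ z := by
      apply hx
      intro n
      rw [hρ g, app_inv, map_inf' hρ, map_abs' hρ, map_nsmul, hinv]
      exact hz n
    rw [hρ g, app_inv, map_abs' hρ] at h1
    exact h1

variable [Fintype G]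

lemma avg_inv (x : E) (g : G) : ρ g (∑ h, ρ h x) = ∑ h, ρ h x := by
  rw [map_sum]
  exact Fintype.sum_equiv (Equiv.mulLeft g) _ _ fun h => by rw [mul_app]; rfl

lemma le_avg (hρ : IsPositiveRep ρ) {x : E} (hx : 0 ≤ x) : x ≤ ∑ h, ρ h x := by
  have := Finset.single_le_sum (f := fun h => ρ h x) (fun h _ => map_nonneg' hρ h hx)
    (Finset.mem_univ (1 : G))
  simpa using this

lemma P_avg [Nontrivial E] (hρ : IsPositiveRep ρ) (hirr : PrincipalBandIrreducible ρ) {x : E}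
    (hx : 0 ≤ x) (hx0 : x ≠ 0) (y : E) : P (∑ h, ρ h x) y := by
  apply P_of_inv hρ hirr (hx.trans (le_avg hρ hx)) _ (avg_inv x)
  intro h
  have := le_avg hρ hx
  rw [h] at this
  exact hx0 (le_antisymm this hx)

lemma weak_unit [Nontrivial E] (hρ : IsPositiveRep ρ) (hirr : PrincipalBandIrreducible ρ) {x y : E}
    (hx : 0 ≤ x) (hx0 : x ≠ 0) (hy : 0 ≤ y) (h : ∀ g, y ⊓ ρ g x = 0) : y = 0 := by
  have h1 : y ⊓ ∑ h, ρ h x = 0 :=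
    disj_sum hy _ _ (fun g _ => map_nonneg' hρ g hx) (fun g _ => h g)
  have := P_avg hρ hirr hx hx0 y 0 fun n => by
    rw [abs_of_nonneg hy, disj_nsmul hy (hx.trans (le_avg hρ hx)) h1]
  rw [abs_of_nonneg hy] at this
  exact le_antisymm this hy

lemma arch [Nontrivial E] (hρ : IsPositiveRep ρ) (hirr : PrincipalBandIrreducible ρ) :
    RieszArchimedean E := by
  intro x y hxy
  have hx : 0 ≤ x := by simpa using (hxy 1 one_pos).1
  have hy : 0 ≤ y := hx.trans (by simpa using (hxy 1 one_pos).2)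
  by_contra hx0
  have hn : ∀ n : ℕ, n • (∑ h, ρ h x) ≤ ∑ h, ρ h y := by
    intro n
    rw [Finset.smul_sum]
    apply Finset.sum_le_sum
    intro g _
    rw [← map_nsmul, ← hρ g]
    rcases Nat.eq_zero_or_pos n with h | h
    · subst h; simpa using hy
    · exact (hxy n h).2
  set e := ∑ h, ρ h x with he
  set f := ∑ h, ρ h y with hf
  have hxe : x ≤ e := le_avg hρ hx
  have hf0 : 0 ≤ f := hy.trans (le_avg hρ hy)
  have h1 := P_avg hρ hirr hx hx0 f (f - e) fun n => by
    refine inf_le_right.trans ?_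
    rw [le_sub_iff_add_le, ← he, ← succ_nsmul]
    exact hn (n + 1)
  rw [abs_of_nonneg hf0, le_sub_self_iff] at h1
  exact hx0 (le_antisymm (hxe.trans h1) hx)

lemma exists_good [Nontrivial E] (hρ : IsPositiveRep ρ) (s : Finset G) :
    ∃ y : E, 0 ≤ y ∧ y ≠ 0 ∧ ∀ g ∈ s, y ⊓ ρ g y = 0 ∨
      ∀ z, 0 ≤ z → z ≠ 0 → z ≤ y → z ⊓ ρ g z ≠ 0 := by
  classical
  induction s using Finset.induction_on with
  | empty =>
    obtain ⟨a, ha⟩ := exists_ne (0 : E)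
    refine ⟨|a|, abs_nonneg a, ?_, by simp⟩
    intro h0
    have h1 : a ≤ 0 := h0 ▸ le_abs_self a
    have h2 : -a ≤ 0 := h0 ▸ neg_le_abs a
    exact ha (le_antisymm h1 (by simpa using h2))
  | insert g s hg ih =>
    obtain ⟨y, hy, hy0, h⟩ := ih
    by_cases hc : ∀ z, 0 ≤ z → z ≠ 0 → z ≤ y → z ⊓ ρ g z ≠ 0
    · refine ⟨y, hy, hy0, ?_⟩
      intro k hk
      rcases Finset.mem_insert.1 hk with rfl | hk
      · exact Or.inr hc
      · exact h k hk
    · push Not at hc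
      obtain ⟨z, hz, hz0, hzy, hzg⟩ := hc
      refine ⟨z, hz, hz0, ?_⟩
      intro k hk
      rcases Finset.mem_insert.1 hk with rfl | hk
      · exact Or.inl hzg
      · rcases h k hk with h1 | h1
        · left
          refine le_antisymm ?_ (le_inf hz (map_nonneg' hρ k hz))
          rw [← h1]
          exact inf_le_inf hzy ((hρ k _ _).1 hzy)
        · right
          exact fun w hw hw0 hwz => h1 w hw hw0 (hwz.trans hzy)

lemma exists_atom [Nontrivial E] (hρ : IsPositiveRep ρ) (hirr : PrincipalBandIrreducible ρ) :
    ∃ y : E, Atom y := by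
  obtain ⟨y, hy, hy0, h⟩ := exists_good (E := E) hρ (Finset.univ : Finset G)
  refine ⟨y, hy, hy0, ?_⟩
  intro a b ha hay hb hby hab
  by_contra! hcon
  obtain ⟨ha0, hb0⟩ := hcon
  apply hb0
  apply weak_unit hρ hirr ha ha0 hb
  intro g
  by_contra hne
  rcases h g (Finset.mem_univ g) with h1 | h1
  · apply hne
    refine le_antisymm ?_ (le_inf hb (map_nonneg' hρ g ha))
    rw [← h1]
    exact inf_le_inf hby ((hρ g _ _).1 hay)
  · have hd : 0 ≤ ρ g⁻¹ (b ⊓ ρ g a) := map_nonneg' hρ _ (le_inf hb (map_nonneg' hρ g ha))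
    have hda : ρ g⁻¹ (b ⊓ ρ g a) ≤ a := by
      rw [hρ g, app_inv]; exact inf_le_right
    refine h1 (ρ g⁻¹ (b ⊓ ρ g a)) hd ?_ (hda.trans hay) ?_
    · simpa using hne
    · rw [app_inv]
      refine le_antisymm ?_ (le_inf hd (le_inf hb (map_nonneg' hρ g ha)))
      rw [← hab]
      exact inf_le_inf hda inf_le_left

lemma atom_disj (hρ : IsPositiveRep ρ) (A : RieszArchimedean E) {o : E} (ho : Atom o) (g : G)
    (hne : o ≠ ρ g o) : o ⊓ ρ g o = 0 := by
  by_contra hcon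
  apply hne
  have hgo := ho.map hρ g
  have hpos : 0 ≤ o ⊓ ρ g o := le_inf ho.1 hgo.1
  obtain ⟨c, hc, hc1⟩ := ho.eq_smul A hpos inf_le_left
  obtain ⟨d, hd, hd1⟩ := hgo.eq_smul A hpos inf_le_right
  have hd0 : d ≠ 0 := by
    rintro rfl
    rw [zero_smul] at hd1
    exact hcon hd1
  have hk : ρ g o = (d⁻¹ * c) • o := by
    rw [mul_smul, ← hc1, hd1, smul_smul, inv_mul_cancel₀ hd0, one_smul]
  have hk0 : 0 ≤ d⁻¹ * c := by positivity
  have hpow : ∀ n : ℕ, ρ (g ^ n) o = (d⁻¹ * c) ^ n • o := by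
    intro n
    induction n with
    | zero => simp
    | succ n ih => rw [pow_succ, ← mul_app, hk, map_smul, ih, smul_smul, pow_succ, mul_comm]
  have h1 := hpow (Fintype.card G)
  rw [pow_card_eq_one, map_one] at h1
  change o = _ at h1
  have h2 : (d⁻¹ * c) ^ (Fintype.card G) = 1 := by
    have : ((d⁻¹ * c) ^ (Fintype.card G) - 1) • o = 0 := by
      rw [sub_smul, ← h1, one_smul, sub_self]
    rcases smul_eq_zero.1 this with h | h
    · linarith
    · exact absurd h ho.2.1
  have h3 : d⁻¹ * c = 1 := (pow_eq_one_iff_of_nonneg hk0 Fintype.card_ne_zero).1 h2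
  rw [hk, h3, one_smul]

lemma span_top [Nontrivial E] (hρ : IsPositiveRep ρ) (hirr : PrincipalBandIrreducible ρ)
    (A : RieszArchimedean E) {y : E} (s : Finset E) (hs : ∀ o, o ∈ s ↔ ∃ g, ρ g y = o)
    (hat : ∀ o ∈ s, Atom o) (hd : ∀ o ∈ s, ∀ o' ∈ s, o ≠ o' → o ⊓ o' = 0) :
    Submodule.span ℝ (s : Set E) = ⊤ := by
  classical
  have hy : Atom y := hat y ((hs y).2 ⟨1, by simp⟩)
  have key : ∀ x : E, 0 ≤ x → x ∈ Submodule.span ℝ (s : Set E) := by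
    intro x hx
    have hex : ∀ o : E, ∃ c : ℝ, o ∈ s → (0 ≤ c ∧ c • o ≤ x ∧ ∀ t : ℝ, t • o ≤ x → t ≤ c) := by
      intro o
      by_cases ho : o ∈ s
      · obtain ⟨c, hc⟩ := exists_max A (hat o ho).1 (hat o ho).2.1 hx
        exact ⟨c, fun _ => hc⟩
      · exact ⟨0, fun h => absurd h ho⟩
    choose c hc using hex
    have hle : ∑ o ∈ s, c o • o ≤ x := by
      apply sum_le_of_disj s _ x hx
      · exact fun o ho => smul_nonneg (hc o ho).1 (hat o ho).1
      · exact fun o ho => (hc o ho).2.1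
      · intro o ho o' ho' hne
        have h1 := disj_smul (hat o ho).1 (hat o' ho').1 (hd o ho o' ho' hne) (hc o' ho').1
        rw [inf_comm] at h1 ⊢
        exact disj_smul (smul_nonneg (hc o' ho').1 (hat o' ho').1) (hat o ho).1 h1 (hc o ho).1
    have hsub : 0 ≤ x - ∑ o ∈ s, c o • o := sub_nonneg.2 hle
    have hz : x - ∑ o ∈ s, c o • o = 0 := by
      apply weak_unit hρ hirr hy.1 hy.2.1 hsub
      intro g
      have ho : ρ g y ∈ s := (hs _).2 ⟨g, rfl⟩
      generalize ρ g y = o at ho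
      obtain ⟨t, ht, ht1⟩ := (hat o ho).eq_smul A (le_inf hsub (hat o ho).1) inf_le_right
      have h2 : c o • o ≤ ∑ o ∈ s, c o • o :=
        Finset.single_le_sum (f := fun o => c o • o)
          (fun o ho => smul_nonneg (hc o ho).1 (hat o ho).1) ho
      have h3 : (t + c o) • o ≤ x := by
        rw [add_smul, ← ht1]
        calc _ ≤ (x - ∑ o ∈ s, c o • o) + ∑ o ∈ s, c o • o := add_le_add inf_le_left h2
          _ = x := sub_add_cancel _ _
      have h4 := (hc o ho).2.2 _ h3
      have h5 : t = 0 := by linarith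
      rw [ht1, h5, zero_smul]
    rw [sub_eq_zero.1 hz]
    exact Submodule.sum_mem _ fun o ho => Submodule.smul_mem _ _ (Submodule.subset_span ho)
  rw [eq_top_iff]
  intro x _
  rw [← posPart_sub_negPart x]
  exact Submodule.sub_mem _ (key _ (posPart_nonneg x)) (key _ (negPart_nonneg x))

end rep

end RieszAux

open RieszAux in
/-- If a finite group `G` has a principal band irreducible positive representation in a
nonzero Riesz space `E`, then `E` is Archimedean, finite dimensional, and the dimension
of `E` divides the order of `G`. -/
theorem stmt7 {G E : Type*} [Group G] [Finite G] [AddCommGroup E] [Lattice E] [Module ℝ E]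
    [Nontrivial E]
    (hadd : ∀ x y z : E, x ≤ y → x + z ≤ y + z)
    (hsmul : ∀ (c : ℝ) (x : E), 0 ≤ c → 0 ≤ x → 0 ≤ c • x)
    (ρ : G →* (E ≃ₗ[ℝ] E)) (hρ : IsPositiveRep ρ)
    (hirr : PrincipalBandIrreducible ρ) :
    RieszArchimedean E ∧ FiniteDimensional ℝ E ∧ Module.finrank ℝ E ∣ Nat.card G := by
  classical
  haveI : IsOrderedAddMonoid E :=
    { add_le_add_left := fun a b h c => hadd a b c h }
  haveI : PosSMulMono ℝ E := PosSMulMono.of_smul_nonneg fun a ha b hb => hsmul a b ha hb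
  haveI : Fintype G := Fintype.ofFinite G
  have A : RieszArchimedean E := arch hρ hirr
  obtain ⟨y, hy⟩ := exists_atom hρ hirr
  set s : Finset E := Finset.univ.image fun g => ρ g y with hsdef
  have hs : ∀ o, o ∈ s ↔ ∃ g, ρ g y = o := by simp [hsdef]
  have hat : ∀ o ∈ s, Atom o := by
    intro o ho
    obtain ⟨g, rfl⟩ := (hs o).1 ho
    exact hy.map hρ g
  have hd : ∀ o ∈ s, ∀ o' ∈ s, o ≠ o' → o ⊓ o' = 0 := by
    intro o ho o' ho' hne
    obtain ⟨g, rfl⟩ := (hs o).1 ho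
    obtain ⟨h, rfl⟩ := (hs o').1 ho'
    have he : ρ h y = ρ (h * g⁻¹) (ρ g y) := by rw [mul_app]; simp
    rw [he] at hne ⊢
    exact atom_disj hρ A (hat _ ho) _ hne
  have hspan := span_top hρ hirr A s hs hat hd
  have hli := linInd (s : Set E) (fun o ho => ⟨(hat o ho).1, (hat o ho).2.1⟩) hd
  refine ⟨A, ⟨⟨s, hspan⟩⟩, ?_⟩
  have hfr := finrank_span_set_eq_card hli
  rw [hspan, finrank_top] at hfr
  rw [hfr, Finset.toFinset_coe]
  letI : MulAction G E := MulAction.compHom E ρ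
  have horb : MulAction.orbit G y = (s : Set E) := by
    ext o
    rw [Finset.mem_coe, hs]
    rfl
  have hidx := MulAction.index_stabilizer G y
  rw [horb, Set.ncard_coe_finset] at hidx
  rw [← hidx]
  exact Subgroup.index_dvd_card _
end

section
/- Let G be a finite group, E a Riesz space with sufficiently many projections, and ρ : G → Aut⁺(E) a positive representation. Then the following are equivalent: (i) ρ is order indecomposable; (ii) ρ is projection band irreducible; (iii) ρ is band irreducible; (iv) ρ is ideal irreducible; (v) ρ is principal band irreducible. Moreover, if these equivalent conditions hold, then E is finite dimensional, and if in addition E is nonzero then the dimension of E divides the order of G. -/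
/-- `ρ` is band irreducible if the only `ρ`-invariant bands are `{0}` and `E`. -/
def BandIrreducible {E : Type*} [AddCommGroup E] [Lattice E] [Module ℝ E]
    {G : Type*} [Group G] (ρ : G →* (E ≃ₗ[ℝ] E)) : Prop :=
  ∀ B : Submodule ℝ E, IsBand B → InvariantSubmodule ρ B → B = ⊥ ∨ B = ⊤

/-- `ρ` is ideal irreducible if the only `ρ`-invariant ideals are `{0}` and `E`. -/
def IdealIrreducible {E : Type*} [AddCommGroup E] [Lattice E] [Module ℝ E]
    {G : Type*} [Group G] (ρ : G →* (E ≃ₗ[ℝ] E)) : Prop :=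
  ∀ I : Submodule ℝ E, IsRieszIdeal I → InvariantSubmodule ρ I → I = ⊥ ∨ I = ⊤

/-- `E` has sufficiently many projections if every nonzero band contains a nonzero
projection band. -/
def SufficientlyManyProjections (E : Type*) [AddCommGroup E] [Lattice E] [Module ℝ E] : Prop :=
  ∀ B : Submodule ℝ E, IsBand B → B ≠ ⊥ →
    ∃ P : Submodule ℝ E, IsProjectionBand P ∧ P ≠ ⊥ ∧ P ≤ B

set_option linter.unusedSectionVars false

namespace RS

section basic
variable {E : Type*} [AddCommGroup E] [Lattice E] [IsOrderedAddMonoid E]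

/-- disjointness -/
def Dj (x y : E) : Prop := |x| ⊓ |y| = 0

theorem Dj.symm {x y : E} (h : Dj x y) : Dj y x := by
  unfold Dj at *; rwa [inf_comm]

theorem inf_nonneg' (x y : E) : 0 ≤ |x| ⊓ |y| := le_inf (abs_nonneg x) (abs_nonneg y)

theorem Dj.mono {x x' y : E} (h : Dj x' y) (hx : |x| ≤ |x'|) : Dj x y := by
  unfold Dj at *
  exact le_antisymm (h ▸ inf_le_inf_right _ hx) (inf_nonneg' x y)

theorem abs_zero_iff {x : E} : |x| = 0 ↔ x = 0 := by
  refine ⟨fun h => ?_, fun h => by rw [h, abs_zero]⟩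
  refine le_antisymm (h ▸ le_abs_self x) ?_
  have := neg_le_abs x
  rw [h] at this
  exact neg_nonpos.mp this

theorem Dj.self {x : E} (h : Dj x x) : x = 0 := by
  unfold Dj at h
  rw [inf_idem] at h
  exact abs_zero_iff.mp h

theorem Dj.zero (y : E) : Dj 0 y := by
  unfold Dj; rw [abs_zero]; exact inf_eq_left.mpr (abs_nonneg y)

theorem Dj.add {x y z : E} (hx : Dj x z) (hy : Dj y z) : Dj (x + y) z := by
  unfold Dj at *
  refine le_antisymm ?_ (inf_nonneg' _ _)
  set w := |x + y| ⊓ |z| with hw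
  have h1 : w ≤ |x| + |y| := inf_le_left.trans (abs_add_le x y)
  have h2 : w ≤ |z| := inf_le_right
  have h3 : w - |y| ≤ |x| ⊓ |z| := by
    refine le_inf ?_ ?_
    · rwa [sub_le_iff_le_add]
    · exact (sub_le_self _ (abs_nonneg y)).trans h2
  rw [hx] at h3
  rw [← hy]
  exact le_inf (sub_nonpos.mp h3) h2

theorem Dj.neg {x z : E} (hx : Dj x z) : Dj (-x) z := hx.mono (by rw [abs_neg])

theorem Dj.sum_eq {x y : E} (h : Dj x y) : |x| + |y| = |x| ⊔ |y| := by
  rw [← inf_add_sup, h, zero_add]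

/-- components of a disjoint sum are bounded -/
theorem Dj.le_add {x y : E} (h : Dj x y) : |x| ≤ |x + y| := by
  have h1 : |x| ≤ |x + y| + |y| := by
    have := abs_add_le (x + y) (-y)
    simpa using this
  have h3 : Dj (|x| - |x| ⊓ |x + y|) y := h.mono (by
    rw [abs_of_nonneg (sub_nonneg.mpr inf_le_left)]
    exact sub_le_self _ (inf_nonneg' _ _))
  have h0 : 0 ≤ |x| - |x| ⊓ |x + y| := sub_nonneg.mpr inf_le_left
  have h4 : |x| - |x| ⊓ |x + y| ≤ |y| := by
    rw [sub_le_iff_le_add, ← sub_le_iff_le_add']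
    refine le_inf (sub_le_self _ (abs_nonneg y)) ?_
    rwa [sub_le_iff_le_add]
  unfold Dj at h3
  rw [abs_of_nonneg h0, inf_eq_left.mpr h4] at h3
  rw [sub_eq_zero] at h3
  rw [h3]; exact inf_le_right

theorem dj_iff_pos {x y : E} (hx : 0 ≤ x) (hy : 0 ≤ y) : Dj x y ↔ x ⊓ y = 0 := by
  unfold Dj; rw [abs_of_nonneg hx, abs_of_nonneg hy]

end basic

section mod
variable {E : Type*} [AddCommGroup E] [Lattice E] [IsOrderedAddMonoid E]
  [Module ℝ E] [PosSMulMono ℝ E]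

theorem smul_nonneg'' {c : ℝ} {x : E} (hc : 0 ≤ c) (hx : 0 ≤ x) : 0 ≤ c • x :=
  smul_nonneg hc hx

theorem smul_mono_left {c d : ℝ} {x : E} (hc : c ≤ d) (hx : 0 ≤ x) : c • x ≤ d • x := by
  rw [← sub_nonneg, ← sub_smul]
  exact smul_nonneg (sub_nonneg.mpr hc) hx

theorem abs_smul_le (c : ℝ) (x : E) : |c • x| ≤ |c| • |x| := by
  have key : ∀ (c : ℝ) (x : E), c • x ≤ |c| • |x| := by
    intro c x
    rcases le_total 0 c with h | h
    · rw [abs_of_nonneg h]; exact smul_le_smul_of_nonneg_left (le_abs_self x) h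
    · rw [abs_of_nonpos h]
      have : c • x = (-c) • (-x) := by simp
      rw [this]; exact smul_le_smul_of_nonneg_left (neg_le_abs x) (by linarith)
  refine abs_le'.mpr ⟨key c x, ?_⟩
  have := key (-c) x
  simpa using this

theorem Dj.nsmul {x z : E} (h : Dj x z) (n : ℕ) : Dj (n • |x|) z := by
  induction n with
  | zero => rw [zero_smul]; exact Dj.zero z
  | succ n ih =>
    rw [succ_nsmul]
    exact ih.add (h.mono (by rw [abs_abs]))

theorem Dj.smul {x z : E} (h : Dj x z) (c : ℝ) : Dj (c • x) z := by
  obtain ⟨n, hn⟩ := exists_nat_ge |c|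
  refine (h.nsmul n).mono ?_
  rw [abs_of_nonneg (nsmul_nonneg (abs_nonneg x) n)]
  refine (abs_smul_le c x).trans ?_
  rw [← Nat.cast_smul_eq_nsmul ℝ]
  exact smul_mono_left hn (abs_nonneg x)

/-- disjoint complement as a submodule -/
def dc (D : Set E) : Submodule ℝ E where
  carrier := disjComplement D
  add_mem' := fun {a b} ha hb y hy => Dj.add (ha y hy) (hb y hy)
  zero_mem' := fun y _ => Dj.zero y
  smul_mem' := fun c x hx y hy => Dj.smul (hx y hy) c

theorem mem_dc {D : Set E} {x : E} : x ∈ dc D ↔ ∀ y ∈ D, Dj x y := Iff.rfl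

theorem lub_empty {x : E} (h : IsLUB (∅ : Set E) x) : x = 0 := by
  have hb : ∀ y, x ≤ y := fun y => h.2 (by simp)
  refine le_antisymm (hb 0) ?_
  have := hb (x + x)
  simpa using this

theorem dc_band (S : Set E) : IsBand (dc S) := by
  refine ⟨fun x y hxy hy z hz => Dj.mono (hy z hz) hxy, ?_⟩
  intro D x hD hx
  rcases D.eq_empty_or_nonempty with rfl | ⟨d0, hd0⟩
  · rw [lub_empty hx]; exact zero_mem _
  intro y hy
  have h2 : Dj x⁻ y := by
    refine Dj.mono (hD hd0 y hy) ?_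
    rw [abs_of_nonneg (negPart_nonneg x)]
    refine (?_ : x⁻ ≤ d0⁻).trans ?_
    · exact negPart_anti (hx.1 hd0)
    · exact sup_le (neg_le_abs d0) (abs_nonneg d0)
  have h1 : Dj x⁺ y := by
    unfold Dj
    refine le_antisymm ?_ (inf_nonneg' _ _)
    set w := |x⁺| ⊓ |y| with hw
    have hw0 : 0 ≤ w := inf_nonneg' _ _
    have hwx : w ≤ x⁺ := by
      have : w ≤ |x⁺| := inf_le_left
      rwa [abs_of_nonneg (posPart_nonneg x)] at this
    have hub : x ≤ x⁺ - w := by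
      refine hx.2 ?_
      intro d hd
      have hdy : Dj d y := hD hd y hy
      have hdw : Dj d⁺ w := by
        have a1 : Dj d⁺ y := hdy.mono (by
          rw [abs_of_nonneg (posPart_nonneg d)]
          exact sup_le (le_abs_self d) (abs_nonneg d))
        exact (a1.symm.mono (by rw [abs_of_nonneg hw0]; exact inf_le_right)).symm
      have hs := hdw.sum_eq
      rw [abs_of_nonneg (posPart_nonneg d), abs_of_nonneg hw0] at hs
      have : d⁺ + w ≤ x⁺ := by
        rw [hs]; exact sup_le (posPart_mono (hx.1 hd)) hwx
      exact (le_posPart d).trans (le_sub_iff_add_le.mpr this)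
    have h3 : x⁺ ≤ x⁺ - w := sup_le hub (sub_nonneg.mpr hwx)
    simpa using h3
  have := h1.add h2.neg
  rwa [← sub_eq_add_neg, posPart_sub_negPart] at this

theorem band_abs {B : Submodule ℝ E} (hB : IsRieszIdeal B) {x : E} (hx : x ∈ B) : |x| ∈ B :=
  hB _ _ (by rw [abs_abs]) hx

theorem band_of_le {B : Submodule ℝ E} (hB : IsRieszIdeal B) {x y : E} (hx : 0 ≤ x) (hxy : x ≤ y)
    (hy : y ∈ B) : x ∈ B :=
  hB x y (by rw [abs_of_nonneg hx]; exact hxy.trans (le_abs_self y)) hy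

/-- decomposition property -/
def PB (S : Submodule ℝ E) : Prop := ∀ x : E, ∃ y ∈ S, ∃ z ∈ dc (S : Set E), x = y + z

theorem PB.dd {S : Submodule ℝ E} (h : PB S) : S = dc (dc (S : Set E) : Set E) := by
  refine le_antisymm (fun x hx y hy => (Dj.symm (hy x hx) : Dj x y)) ?_
  intro x hx
  obtain ⟨y, hy, z, hz, rfl⟩ := h x
  have hzz : Dj z z := by
    have h1 : Dj (y + z) z := hx z hz
    have h2 : Dj y z := Dj.symm (hz y hy)
    have := h1.add h2.neg
    simpa using this
  rw [hzz.self]; simpa using hy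

theorem PB.proj {S : Submodule ℝ E} (h : PB S) : IsProjectionBand S := by
  refine ⟨?_, h⟩
  rw [h.dd]; exact dc_band _

theorem PB.bot : PB (⊥ : Submodule ℝ E) := by
  intro x
  refine ⟨0, zero_mem _, x, ?_, by simp⟩
  intro y hy
  have : y = 0 := by simpa using hy
  subst this
  exact (Dj.zero x).symm

theorem PB.sup {P Q : Submodule ℝ E} (hP : PB P) (hQ : PB Q) : PB (P ⊔ Q) := by
  intro x
  obtain ⟨p, hp, p', hp', rfl⟩ := hP x
  obtain ⟨q, hq, r, hr, rfl⟩ := hQ p'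
  refine ⟨p + q, Submodule.add_mem_sup hp hq, r, ?_, by rw [add_assoc]⟩
  intro y hy
  obtain ⟨a, ha, b, hb, rfl⟩ := Submodule.mem_sup.mp hy
  have hrq : Dj r q := hr q hq
  have hle := hrq.le_add
  rw [add_comm] at hle
  have h1 : Dj r a := Dj.mono (hp' a ha) hle
  have h2 : Dj r b := hr b hb
  exact (h1.symm.add h2.symm).symm

end mod

section rep
variable {G E : Type*} [Group G] [AddCommGroup E] [Lattice E] [IsOrderedAddMonoid E]
  [Module ℝ E] [PosSMulMono ℝ E] {ρ : G →* (E ≃ₗ[ℝ] E)}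

theorem rho_inv (s : G) (x : E) : ρ s (ρ s⁻¹ x) = x := by
  rw [← LinearEquiv.mul_apply, ← map_mul]; simp

theorem rho_inv' (s : G) (x : E) : ρ s⁻¹ (ρ s x) = x := by
  rw [← LinearEquiv.mul_apply, ← map_mul]; simp

theorem rho_mul (s t : G) (x : E) : ρ (s * t) x = ρ s (ρ t x) := by
  rw [map_mul]; rfl

/-- order isomorphism -/
def oi (hρ : IsPositiveRep ρ) (s : G) : E ≃o E where
  toEquiv := (ρ s).toEquiv
  map_rel_iff' := fun {a b} => (hρ s a b).symm

theorem rho_inf (hρ : IsPositiveRep ρ) (s : G) (x y : E) : ρ s (x ⊓ y) = ρ s x ⊓ ρ s y :=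
  (oi hρ s).map_inf x y

theorem rho_abs (hρ : IsPositiveRep ρ) (s : G) (x : E) : ρ s |x| = |ρ s x| := by
  have := (oi hρ s).map_sup x (-x)
  have h2 : ρ s (x ⊔ -x) = ρ s x ⊔ ρ s (-x) := this
  rw [map_neg] at h2
  exact h2

theorem rho_dj (hρ : IsPositiveRep ρ) (s : G) {x y : E} (h : Dj x y) : Dj (ρ s x) (ρ s y) := by
  unfold Dj at *
  rw [← rho_abs hρ, ← rho_abs hρ, ← rho_inf hρ, h, map_zero]

theorem rho_nonneg (hρ : IsPositiveRep ρ) (s : G) {x : E} (h : 0 ≤ x) : 0 ≤ ρ s x := by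
  have := (hρ s 0 x).mp h
  simpa using this

theorem rho_ne (s : G) {x : E} (h : x ≠ 0) : ρ s x ≠ 0 := by
  simpa using h

theorem dc_inv (hρ : IsPositiveRep ρ) {D : Set E} (hD : ∀ s, ∀ x ∈ D, ρ s x ∈ D) :
    InvariantSubmodule ρ (dc D) := by
  intro s x hx y hy
  have h1 : Dj x (ρ s⁻¹ y) := hx _ (hD _ _ hy)
  have := rho_dj hρ s h1
  rwa [rho_inv] at this

theorem PB.map (hρ : IsPositiveRep ρ) {P : Submodule ℝ E} (hP : PB P) (s : G) :
    PB (P.map (ρ s).toLinearMap) := by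
  intro x
  obtain ⟨y, hy, z, hz, h⟩ := hP (ρ s⁻¹ x)
  refine ⟨ρ s y, ⟨y, hy, rfl⟩, ρ s z, ?_, by rw [← map_add, ← h, rho_inv]⟩
  rintro _ ⟨w, hw, rfl⟩
  exact rho_dj hρ s (hz w hw)

/-- the sum of all translates -/
def tr (ρ : G →* (E ≃ₗ[ℝ] E)) (P : Submodule ℝ E) : Submodule ℝ E :=
  ⨆ s : G, P.map (ρ s).toLinearMap

theorem PB.tr [Finite G] (hρ : IsPositiveRep ρ) {P : Submodule ℝ E} (hP : PB P) :
    PB (tr ρ P) := by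
  classical
  cases nonempty_fintype G
  have : ∀ T : Finset G, PB (T.sup fun s => P.map (ρ s).toLinearMap) := by
    intro T
    induction T using Finset.induction_on with
    | empty => rw [Finset.sup_empty]; exact PB.bot
    | insert a T _ ih => rw [Finset.sup_insert]; exact (hP.map hρ a).sup ih
  have h := this Finset.univ
  rwa [Finset.sup_univ_eq_iSup] at h

theorem tr_inv (P : Submodule ℝ E) : InvariantSubmodule ρ (tr ρ P) := by
  intro s x hx
  have : tr ρ P ≤ (tr ρ P).comap (ρ s).toLinearMap := by
    refine iSup_le fun t => ?_
    rintro _ ⟨w, hw, rfl⟩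
    refine Submodule.mem_iSup_of_mem (s * t) ⟨w, hw, ?_⟩
    exact rho_mul s t w
  exact this hx

theorem tr_le {P B : Submodule ℝ E} (h : P ≤ B) (hB : InvariantSubmodule ρ B) : tr ρ P ≤ B := by
  refine iSup_le fun t => ?_
  rintro _ ⟨w, hw, rfl⟩
  exact hB t w (h hw)

theorem le_tr (P : Submodule ℝ E) : P ≤ tr ρ P := by
  intro x hx
  refine Submodule.mem_iSup_of_mem 1 ⟨x, hx, ?_⟩
  simp

theorem tr_top [Finite G] (hρ : IsPositiveRep ρ) (h : ProjectionBandIrreducible ρ)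
    {P : Submodule ℝ E} (hP : PB P) (h0 : P ≠ ⊥) : tr ρ P = ⊤ := by
  rcases h _ (hP.tr hρ).proj (tr_inv P) with h1 | h1
  · exact absurd (le_bot_iff.mp (h1 ▸ le_tr P)) h0
  · exact h1

theorem band_of_pb [Finite G] (hE : SufficientlyManyProjections E) (hρ : IsPositiveRep ρ)
    (h : ProjectionBandIrreducible ρ) : BandIrreducible ρ := by
  intro B hB hi
  by_cases h0 : B = ⊥
  · exact Or.inl h0
  right
  obtain ⟨P, hP, hP0, hPB⟩ := hE B hB h0
  exact top_le_iff.mp (tr_top hρ h hP.2 hP0 ▸ tr_le hPB hi)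

theorem od_dj {L M : Submodule ℝ E} (h : IsOrderDecomposition L M) :
    ∀ y ∈ L, ∀ z ∈ M, Dj y z := by
  obtain ⟨h1, h2, h3⟩ := h
  have absL : ∀ y ∈ L, |y| ∈ L := by
    intro y hy
    obtain ⟨l, hl, m, hm, e⟩ := h1 |y|
    have a0 := (h3 l m hl hm).mp (e ▸ abs_nonneg y)
    have a1 : y ≤ l := by
      have : 0 ≤ (l - y) + m := by
        have := sub_nonneg.mpr (le_abs_self y)
        rw [e] at this
        convert this using 1; abel
      exact sub_nonneg.mp ((h3 _ _ (sub_mem hl hy) hm).mp this).1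
    have a2 : -y ≤ l := by
      have : 0 ≤ (l - -y) + m := by
        have := sub_nonneg.mpr (neg_le_abs y)
        rw [e] at this
        convert this using 1; abel
      exact sub_nonneg.mp ((h3 _ _ (sub_mem hl (neg_mem hy)) hm).mp this).1
    have a3 : |y| ≤ l := abs_le'.mpr ⟨a1, a2⟩
    have a4 : l ≤ |y| := by rw [e]; exact le_add_of_nonneg_right a0.2
    rw [le_antisymm a3 a4]; exact hl
  have absM : ∀ y ∈ M, |y| ∈ M := by
    intro y hy
    obtain ⟨l, hl, m, hm, e⟩ := h1 |y|
    have a0 := (h3 l m hl hm).mp (e ▸ abs_nonneg y)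
    have a1 : y ≤ m := by
      have : 0 ≤ l + (m - y) := by
        have := sub_nonneg.mpr (le_abs_self y)
        rw [e] at this
        convert this using 1; abel
      exact sub_nonneg.mp ((h3 _ _ hl (sub_mem hm hy)).mp this).2
    have a2 : -y ≤ m := by
      have : 0 ≤ l + (m - -y) := by
        have := sub_nonneg.mpr (neg_le_abs y)
        rw [e] at this
        convert this using 1; abel
      exact sub_nonneg.mp ((h3 _ _ hl (sub_mem hm (neg_mem hy))).mp this).2
    have a3 : |y| ≤ m := abs_le'.mpr ⟨a1, a2⟩
    have a4 : m ≤ |y| := by rw [e]; exact le_add_of_nonneg_left a0.1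
    rw [le_antisymm a3 a4]; exact hm
  intro y hy z hz
  unfold Dj
  obtain ⟨l, hl, m, hm, e⟩ := h1 (|y| ⊓ |z|)
  have a0 := (h3 l m hl hm).mp (e ▸ inf_nonneg' y z)
  have a1 : 0 ≤ (|y| - l) + (-m) := by
    have : 0 ≤ |y| - (|y| ⊓ |z|) := sub_nonneg.mpr inf_le_left
    rw [e] at this
    convert this using 1; abel
  have a2 : 0 ≤ (-l) + (|z| - m) := by
    have : 0 ≤ |z| - (|y| ⊓ |z|) := sub_nonneg.mpr inf_le_right
    rw [e] at this
    convert this using 1; abel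
  have b1 := ((h3 _ _ (sub_mem (absL y hy) hl) (neg_mem hm)).mp a1).2
  have b2 := ((h3 _ _ (neg_mem hl) (sub_mem (absM z hz) hm)).mp a2).1
  rw [e, le_antisymm (neg_nonneg.mp b1) a0.2, le_antisymm (neg_nonneg.mp b2) a0.1, add_zero]

theorem dj_pos {y z : E} (h : Dj y z) (h0 : 0 ≤ y + z) : 0 ≤ y := by
  have h1 : -y ≤ z := by rw [neg_le_iff_add_nonneg]; rwa [add_comm] at h0
  have h2 : y⁻ ≤ |y| ⊓ |z| := by
    refine le_inf (sup_le (neg_le_abs y) (abs_nonneg y)) ?_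
    exact sup_le (h1.trans (le_abs_self z)) (abs_nonneg z)
  rw [h] at h2
  have := (le_sup_left : -y ≤ -y ⊔ 0).trans h2
  exact neg_nonpos.mp this

theorem oi_iff (hρ : IsPositiveRep ρ) :
    OrderIndecomposable ρ ↔ ProjectionBandIrreducible ρ := by
  constructor
  · intro h B hB hi
    refine h B (dc (B : Set E)) ⟨hB.2, ?_, ?_⟩ hi (dc_inv hρ hi)
    · intro x hx hx'
      exact Dj.self (hx' x hx)
    · intro y z hy hz
      have hd : Dj z y := hz y hy
      refine ⟨fun h0 => ⟨dj_pos hd.symm h0, dj_pos hd (by rwa [add_comm])⟩, fun h0 => add_nonneg h0.1 h0.2⟩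
  · intro h L M hLM hL _
    refine h L (PB.proj ?_) hL
    intro x
    obtain ⟨y, hy, z, hz, e⟩ := hLM.1 x
    exact ⟨y, hy, z, fun w hw => (od_dj hLM w hw z hz).symm, e⟩

theorem comap_band (hρ : IsPositiveRep ρ) (s : G) {B : Submodule ℝ E} (hB : IsBand B) :
    IsBand (B.comap (ρ s).toLinearMap) := by
  constructor
  · intro x y hxy hy
    refine hB.1 (ρ s x) (ρ s y) ?_ hy
    rw [← rho_abs hρ, ← rho_abs hρ]
    exact (hρ s _ _).mp hxy
  · intro D x hD hx
    refine hB.2 (ρ s '' D) (ρ s x) ?_ ?_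
    · rintro _ ⟨d, hd, rfl⟩; exact hD hd
    · exact (oi hρ s).isLUB_image'.mpr hx

theorem band_of_principal [Finite G] (hρ : IsPositiveRep ρ)
    (h : PrincipalBandIrreducible ρ) : BandIrreducible ρ := by
  intro B hB hi
  by_cases h0 : B = ⊥
  · exact Or.inl h0
  right
  cases nonempty_fintype G
  obtain ⟨x, hx, hx0⟩ := Submodule.exists_mem_ne_zero_of_ne_bot h0
  set y := ∑ s : G, ρ s |x| with hy
  have hyB : y ∈ B := Submodule.sum_mem _ fun s _ => hi s _ (band_abs hB.1 hx)
  have hyi : ∀ s, ρ s y = y := by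
    intro s
    rw [hy, map_sum]
    simp_rw [← rho_mul]
    exact Fintype.sum_equiv (Equiv.mulLeft s) _ _ (fun t => rfl)
  have hxy : |x| ≤ y := by
    have := Finset.single_le_sum (f := fun s : G => ρ s |x|)
      (fun s _ => rho_nonneg hρ s (abs_nonneg x)) (Finset.mem_univ 1)
    simpa using this
  set C : Submodule ℝ E := sInf {C | IsBand C ∧ y ∈ C} with hC
  have hyC : y ∈ C := by
    rw [hC, Submodule.mem_sInf]; exact fun K hK => hK.2
  have hCle : ∀ K : Submodule ℝ E, IsBand K → y ∈ K → C ≤ K := fun K h1 h2 => sInf_le ⟨h1, h2⟩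
  have hCb : IsBand C := by
    constructor
    · intro a b hab hb
      rw [hC, Submodule.mem_sInf] at *
      exact fun K hK => hK.1.1 a b hab (hb K hK)
    · intro D a hD ha
      rw [hC, Submodule.mem_sInf]
      exact fun K hK => hK.1.2 D a (fun d hd => hCle K hK.1 hK.2 (hD hd)) ha
  have hCi : InvariantSubmodule ρ C := by
    intro s a ha
    refine hCle _ (comap_band hρ s hCb) ?_ ha
    change ρ s y ∈ C
    rwa [hyi]
  rcases h C ⟨hCb, y, hyC, hCle⟩ hCi with h1 | h1
  · exfalso
    rw [h1, Submodule.mem_bot] at hyC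
    rw [hyC] at hxy
    exact hx0 (abs_zero_iff.mp (le_antisymm hxy (abs_nonneg x)))
  · exact top_le_iff.mp (h1 ▸ hCle B hB hyB)

theorem meet (hρ : IsPositiveRep ρ) (h : BandIrreducible ρ) {z x : E} (hz : z ≠ 0) (hx : x ≠ 0) :
    ∃ s, ¬ Dj z (ρ s x) := by
  by_contra! hc
  have hb := dc_band (Set.range fun s => ρ s x)
  have hi : InvariantSubmodule ρ (dc (Set.range fun s => ρ s x)) := by
    refine dc_inv hρ ?_
    rintro s _ ⟨t, rfl⟩
    exact ⟨s * t, rho_mul s t x⟩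
  have hzm : z ∈ dc (Set.range fun s => ρ s x) := by
    rintro _ ⟨t, rfl⟩
    exact hc t
  rcases h _ hb hi with h1 | h1
  · rw [h1] at hzm; exact hz (by simpa using hzm)
  · have : x ∈ dc (Set.range fun s => ρ s x) := by rw [h1]; trivial
    exact hx (Dj.self (this x ⟨1, by simp⟩))

/-- atoms -/
def Atom (x : E) : Prop :=
  0 ≤ x ∧ x ≠ 0 ∧ ∀ u v : E, |u| ≤ x → |v| ≤ x → Dj u v → u = 0 ∨ v = 0

theorem exists_atom [Finite G] [Nontrivial E] (hρ : IsPositiveRep ρ) (h : BandIrreducible ρ) :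
    ∃ x : E, Atom x := by
  classical
  let N : E → Set G := fun x => {s | ¬ Dj (ρ s x) x}
  let S : Set ℕ := {n | ∃ x : E, x ≠ 0 ∧ (N x).ncard = n}
  have hS : S.Nonempty := by
    obtain ⟨x, hx⟩ := exists_ne (0 : E)
    exact ⟨_, x, hx, rfl⟩
  obtain ⟨x, hx0, hxn⟩ := Nat.sInf_mem hS
  refine ⟨|x|, abs_nonneg x, fun e => hx0 (abs_zero_iff.mp e), ?_⟩
  intro u v hu hv huv
  by_contra! hne
  obtain ⟨s, hs⟩ := meet hρ h hne.2 hne.1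
  -- z = |u| ⊓ ρ s⁻¹ |v|
  set z := |u| ⊓ ρ s⁻¹ |v| with hz
  have hz0 : 0 ≤ z := le_inf (abs_nonneg u) (rho_nonneg hρ _ (abs_nonneg v))
  have hsz : ρ s z = |ρ s u| ⊓ |v| := by rw [hz, rho_inf hρ, rho_inv, rho_abs hρ]
  have hzne : z ≠ 0 := by
    intro h0
    rw [h0, map_zero] at hsz
    apply hs
    exact Dj.symm hsz.symm
  have hzu : |z| ≤ |u| := by rw [abs_of_nonneg hz0]; exact inf_le_left
  have hszv : |ρ s z| ≤ |v| := by
    rw [abs_of_nonneg (rho_nonneg hρ s hz0), hsz]; exact inf_le_right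
  have hmono : ∀ t, |ρ t z| ≤ |ρ t x| := by
    intro t
    rw [← rho_abs hρ, ← rho_abs hρ]
    exact (hρ t _ _).mp (hzu.trans hu)
  have hlt : N z ⊂ N x := by
    refine ⟨fun t ht hd => ht ?_, fun hsub => ?_⟩
    · exact ((hd.mono (hmono t)).symm.mono (hzu.trans hu)).symm
    · have h1 : s ∉ N z := by
        intro h2
        exact h2 ((huv.mono hzu).symm.mono hszv)
      apply h1
      apply hsub
      intro hd
      have h3 : Dj (ρ s z) x := hd.mono (hmono s)
      have h4 := (h3.symm.mono (hszv.trans hv)).self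
      exact hzne (by simpa using h4)
  have hcard := Set.ncard_lt_ncard hlt (Set.toFinite _)
  have : sInf S ≤ (N z).ncard := Nat.sInf_le ⟨z, hzne, rfl⟩
  omega

theorem Atom.rho (hρ : IsPositiveRep ρ) {x : E} (hx : Atom x) (s : G) : Atom (ρ s x) := by
  refine ⟨rho_nonneg hρ s hx.1, rho_ne s hx.2.1, ?_⟩
  intro u v hu hv huv
  have key : ∀ w, |w| ≤ ρ s x → |ρ s⁻¹ w| ≤ x := by
    intro w hw
    rw [← rho_abs hρ]
    have := (hρ s⁻¹ _ _).mp hw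
    rwa [rho_inv'] at this
  have := hx.2.2 _ _ (key u hu) (key v hv) (rho_dj hρ s⁻¹ huv)
  simpa using this

end rep

section atom
variable {E : Type*} [AddCommGroup E] [Lattice E] [IsOrderedAddMonoid E]
  [Module ℝ E] [PosSMulMono ℝ E]

/-- double complement of an element -/
abbrev dd (x : E) : Submodule ℝ E := dc (dc {x} : Set E)

theorem mem_dd (x : E) : x ∈ dd x := fun _ hy => Dj.symm (hy x rfl)

theorem Atom.dd {x : E} (hx : Atom x) {u v : E} (hu : u ∈ dd x) (hv : v ∈ dd x) (h : Dj u v) :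
    u = 0 ∨ v = 0 := by
  have hp : ∀ w : E, 0 ≤ |w| ⊓ x := fun w => le_inf (abs_nonneg w) hx.1
  have hz : ∀ w ∈ RS.dd x, |w| ⊓ x = 0 → w = 0 := by
    intro w hw h0
    have h1 : w ∈ dc ({x} : Set E) := by
      rintro y rfl
      change |w| ⊓ |y| = 0
      rwa [abs_of_nonneg hx.1]
    exact Dj.self (hw w h1)
  have h1 : Dj (|u| ⊓ x) (|v| ⊓ x) := by
    refine (Dj.mono (h.mono ?_).symm ?_).symm
    · rw [abs_of_nonneg (hp u)]; exact inf_le_left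
    · rw [abs_of_nonneg (hp v)]; exact inf_le_left
  rcases hx.2.2 _ _ (by rw [abs_of_nonneg (hp u)]; exact inf_le_right)
    (by rw [abs_of_nonneg (hp v)]; exact inf_le_right) h1 with h2 | h2
  · exact Or.inl (hz u hu h2)
  · exact Or.inr (hz v hv h2)

theorem Atom.total {x : E} (hx : Atom x) {a : E} (ha : a ∈ RS.dd x) : a ≤ 0 ∨ 0 ≤ a := by
  have hi := (dc_band (dc {x} : Set E)).1
  have h1 : a⁺ ∈ RS.dd x := hi _ a (by
    rw [abs_of_nonneg (posPart_nonneg a)]; exact sup_le (le_abs_self a) (abs_nonneg a)) ha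
  have h2 : a⁻ ∈ RS.dd x := hi _ a (by
    rw [abs_of_nonneg (negPart_nonneg a)]; exact sup_le (neg_le_abs a) (abs_nonneg a)) ha
  have h3 : Dj a⁺ a⁻ := by
    rw [dj_iff_pos (posPart_nonneg a) (negPart_nonneg a)]
    exact posPart_inf_negPart_eq_zero a
  rcases hx.dd h1 h2 h3 with h | h
  · left; exact posPart_eq_zero.mp h
  · right; exact negPart_eq_zero.mp h

/-- principal ideal -/
def pid (v : E) (hv : 0 ≤ v) : Submodule ℝ E where
  carrier := {w | ∃ c : ℝ, 0 ≤ c ∧ |w| ≤ c • v}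
  add_mem' := by
    rintro a b ⟨c, hc, h⟩ ⟨d, hd, h'⟩
    refine ⟨c + d, add_nonneg hc hd, (abs_add_le a b).trans ?_⟩
    rw [add_smul]; exact add_le_add h h'
  zero_mem' := ⟨0, le_rfl, by simp⟩
  smul_mem' := by
    rintro k a ⟨c, hc, h⟩
    refine ⟨|k| * c, mul_nonneg (abs_nonneg k) hc, (abs_smul_le k a).trans ?_⟩
    rw [mul_smul]
    exact smul_le_smul_of_nonneg_left h (abs_nonneg k)

theorem mem_pid_self (v : E) (hv : 0 ≤ v) : v ∈ pid v hv :=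
  ⟨1, zero_le_one, by rw [one_smul, abs_of_nonneg hv]⟩

theorem pid_ideal (v : E) (hv : 0 ≤ v) : IsRieszIdeal (pid v hv) := by
  rintro x y hxy ⟨c, hc, h⟩
  exact ⟨c, hc, hxy.trans h⟩

theorem Atom.pid_le {x v : E} (hv : 0 ≤ v) (hvA : v ∈ RS.dd x) : pid v hv ≤ RS.dd x := by
  rintro w ⟨c, hc, h⟩
  exact band_of_le' w c h hc
where
  band_of_le' (w : E) (c : ℝ) (h : |w| ≤ c • v) (_ : 0 ≤ c) : w ∈ RS.dd x :=
    (dc_band (dc {x} : Set E)).1 w (c • v) (h.trans (le_abs_self _))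
      (Submodule.smul_mem _ c hvA)

theorem Atom.pid_band {x v : E} (hx : Atom x) (hv : 0 ≤ v) (hv0 : v ≠ 0) (hvA : v ∈ RS.dd x) :
    IsBand (pid v hv) := by
  refine ⟨pid_ideal v hv, ?_⟩
  intro D y hD hy
  rcases D.eq_empty_or_nonempty with rfl | _
  · rw [lub_empty hy]; exact zero_mem _
  by_contra hyn
  have hyA : y ∈ RS.dd x :=
    (dc_band (dc {x} : Set E)).2 D y (fun d hd => Atom.pid_le hv hvA (hD hd)) hy
  have hub : y ≤ y - v := by
    refine hy.2 ?_
    intro d hd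
    have hdA : d ∈ RS.dd x := Atom.pid_le hv hvA (hD hd)
    rcases hx.total (sub_mem (sub_mem hyA hvA) hdA) with h | h
    · exfalso
      apply hyn
      have h1 : 0 ≤ y - d := sub_nonneg.mpr (hy.1 hd)
      have h2 : y - d ≤ v := by
        rw [← sub_nonpos]; convert h using 1; abel
      have h3 : y - d ∈ pid v hv := band_of_le (pid_ideal v hv) h1 h2 (mem_pid_self v hv)
      have := add_mem h3 (hD hd)
      simpa using this
    · exact sub_nonneg.mp h
  have : v ≤ 0 := by simpa using hub
  exact hv0 (le_antisymm this hv)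

theorem Atom.proj_top {x : E} (hx : Atom x) {P : Submodule ℝ E} (hP : PB P) (h0 : P ≠ ⊥)
    (hPA : P ≤ RS.dd x) : P = RS.dd x := by
  refine le_antisymm hPA ?_
  intro u hu
  obtain ⟨p, hp, q, hq, rfl⟩ := hP u
  obtain ⟨p0, hp0, hpn⟩ := Submodule.exists_mem_ne_zero_of_ne_bot h0
  have hqA : q ∈ RS.dd x := by
    have := sub_mem hu (hPA hp)
    simpa using this
  rcases hx.dd hqA (hPA hp0) (hq p0 hp0) with h | h
  · rw [h]; simpa using hp
  · exact absurd h hpn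

theorem Atom.arch (hE : SufficientlyManyProjections E) {x v : E} (hx : Atom x) (hv : 0 ≤ v)
    (hv0 : v ≠ 0) (hvA : v ∈ RS.dd x) : pid v hv = RS.dd x := by
  have hne : pid v hv ≠ ⊥ := by
    intro h
    have := mem_pid_self v hv
    rw [h] at this
    exact hv0 (by simpa using this)
  obtain ⟨P, hP, hP0, hle⟩ := hE _ (hx.pid_band hv hv0 hvA) hne
  have := hx.proj_top hP.2 hP0 (hle.trans (Atom.pid_le hv hvA))
  exact le_antisymm (Atom.pid_le hv hvA) (this ▸ hle)

theorem Atom.pb (hE : SufficientlyManyProjections E) {x : E} (hx : Atom x) : PB (RS.dd x) := by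
  have hne : RS.dd x ≠ ⊥ := by
    intro h
    have := mem_dd x
    rw [h] at this
    exact hx.2.1 (by simpa using this)
  obtain ⟨P, hP, hP0, hle⟩ := hE _ (dc_band _) hne
  have := hx.proj_top hP.2 hP0 hle
  rw [← this]; exact hP.2

theorem Atom.line (hE : SufficientlyManyProjections E) {x u : E} (hx : Atom x)
    (hu : u ∈ RS.dd x) : ∃ c : ℝ, u = c • x := by
  have hxA := mem_dd x
  obtain ⟨n, hn, hun⟩ : u ∈ pid x hx.1 := by rw [hx.arch hE hx.1 hx.2.1 hxA]; exact hu
  set S : Set ℝ := {t | t • x ≤ u} with hS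
  have hSne : S.Nonempty := ⟨-n, by
    change (-n) • x ≤ u
    rw [neg_smul]
    exact neg_le.mp ((neg_le_abs u).trans hun)⟩
  have hbd : ∀ t d : ℝ, t • x ≤ d • x → t ≤ d := by
    intro t d h
    by_contra! hc
    have h1 : (t - d) • x ≤ 0 := by rw [sub_smul]; exact sub_nonpos.mpr h
    have h2 := smul_nonneg (sub_nonneg.mpr hc.le) hx.1
    have h3 := le_antisymm h1 h2
    rcases smul_eq_zero.mp h3 with h4 | h4
    · linarith
    · exact hx.2.1 h4
  have hSb : BddAbove S := ⟨n, fun t ht => hbd _ _ (le_trans ht ((le_abs_self u).trans hun))⟩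
  refine ⟨sSup S, ?_⟩
  set c := sSup S with hc
  by_contra hne
  set w := u - c • x with hw
  have hw0 : w ≠ 0 := sub_ne_zero.mpr hne
  have hwA : w ∈ RS.dd x := sub_mem hu (Submodule.smul_mem _ _ hxA)
  obtain ⟨m, hm, hxm⟩ : x ∈ pid |w| (abs_nonneg w) := by
    rw [hx.arch hE (abs_nonneg w) (fun e => hw0 (abs_zero_iff.mp e)) (band_abs (dc_band _).1 hwA)]
    exact hxA
  rw [abs_of_nonneg hx.1] at hxm
  have hε : ∀ ε : ℝ, 0 < ε → |w| ≤ ε • x := by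
    intro ε he
    refine abs_le'.mpr ⟨?_, ?_⟩
    · have h1 : ¬ (c + ε) • x ≤ u := by
        intro h
        have : c + ε ≤ c := le_csSup hSb h
        linarith
      rcases hx.total (sub_mem hu (Submodule.smul_mem _ (c + ε) hxA)) with h | h
      · rw [hw]
        rw [← sub_nonpos]
        convert h using 1
        rw [add_smul]; abel
      · exact absurd (sub_nonneg.mp h) h1
    · obtain ⟨t, ht, htc⟩ := exists_lt_of_lt_csSup hSne (show c - ε < sSup S by rw [← hc]; linarith)
      have h1 : (c - ε) • x ≤ u := (smul_mono_left htc.le hx.1).trans ht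
      rw [hw]
      rw [← sub_nonneg] at h1 ⊢
      convert h1 using 1
      rw [sub_smul]; abel
  have hpos : (0 : ℝ) < 1 / (2 * (m + 1)) := by positivity
  have h1 := hε _ hpos
  have h2 : x ≤ (m * (1 / (2 * (m + 1)))) • x := by
    rw [mul_smul]
    exact hxm.trans (smul_le_smul_of_nonneg_left h1 hm)
  have h3 := hbd 1 (m * (1 / (2 * (m + 1)))) (by rwa [one_smul])
  have h4 : m * (1 / (2 * (m + 1))) < 1 := by
    rw [mul_one_div, div_lt_one (by positivity)]; linarith
  linarith

theorem Atom.disj (hE : SufficientlyManyProjections E) {x y : E} (hx : Atom x) (hy : Atom y) :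
    Dj x y ∨ ∃ c : ℝ, y = c • x := by
  by_cases h : Dj x y
  · exact Or.inl h
  right
  rw [dj_iff_pos hx.1 hy.1] at h
  have h0 : 0 ≤ x ⊓ y := le_inf hx.1 hy.1
  obtain ⟨c, hc⟩ := hx.line hE (band_of_le (dc_band _).1 h0 inf_le_left (mem_dd x))
  obtain ⟨d, hd⟩ := hy.line hE (band_of_le (dc_band _).1 h0 inf_le_right (mem_dd y))
  have hd0 : d ≠ 0 := by
    rintro rfl
    rw [zero_smul] at hd
    exact h hd
  refine ⟨d⁻¹ * c, ?_⟩
  rw [mul_smul, ← hc, hd, smul_smul, inv_mul_cancel₀ hd0, one_smul]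

theorem lin_indep {ι : Type*} (v : ι → E) (h0 : ∀ i, v i ≠ 0)
    (hd : ∀ i j, i ≠ j → Dj (v i) (v j)) : LinearIndependent ℝ v := by
  rw [linearIndependent_iff_notMem_span]
  intro i hi
  have hle : Submodule.span ℝ (v '' (Set.univ \ {i})) ≤ dc {v i} := by
    rw [Submodule.span_le]
    rintro _ ⟨j, hj, rfl⟩ y hy
    have hy' : y = v i := hy
    subst hy'
    exact hd j i (fun e => hj.2 e)
  exact h0 i (Dj.self (hle hi (v i) rfl))

end atom

section fin
variable {G E : Type*} [Group G] [Finite G] [AddCommGroup E] [Lattice E] [IsOrderedAddMonoid E]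
  [Module ℝ E] [PosSMulMono ℝ E] {ρ : G →* (E ≃ₗ[ℝ] E)}

theorem span_orbit (hE : SufficientlyManyProjections E) (hρ : IsPositiveRep ρ)
    (h : ProjectionBandIrreducible ρ) {x : E} (hx : Atom x) (K : Submodule ℝ E)
    (hK : ∀ s, ρ s x ∈ K) : K = ⊤ := by
  have hne : dd x ≠ ⊥ := by
    intro h
    have := mem_dd x
    rw [h] at this
    exact hx.2.1 (by simpa using this)
  have ht := tr_top hρ h (hx.pb hE) hne
  rw [eq_top_iff, ← ht]
  refine iSup_le fun s => ?_
  rintro _ ⟨w, hw, rfl⟩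
  obtain ⟨c, rfl⟩ := hx.line hE hw
  change ρ s (c • x) ∈ K
  rw [map_smul]
  exact Submodule.smul_mem _ _ (hK s)

theorem ideal_of_pb (hE : SufficientlyManyProjections E) (hρ : IsPositiveRep ρ)
    (h : ProjectionBandIrreducible ρ) : IdealIrreducible ρ := by
  intro I hI hi
  by_cases h0 : I = ⊥
  · exact Or.inl h0
  right
  have hb := band_of_pb hE hρ h
  obtain ⟨y, hy, hy0⟩ := Submodule.exists_mem_ne_zero_of_ne_bot h0
  haveI : Nontrivial E := ⟨y, 0, hy0⟩
  obtain ⟨x, hx⟩ := exists_atom hρ hb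
  obtain ⟨s, hs⟩ := meet hρ hb hy0 hx.2.1
  have hxs := hx.rho hρ s
  have hw0 : 0 ≤ |y| ⊓ ρ s x := le_inf (abs_nonneg y) hxs.1
  obtain ⟨c, hc⟩ := hxs.line hE (band_of_le (dc_band _).1 hw0 inf_le_right (mem_dd _))
  have hwI : |y| ⊓ ρ s x ∈ I := band_of_le hI hw0 inf_le_left (band_abs hI hy)
  have hc0 : c ≠ 0 := by
    rintro rfl
    rw [zero_smul] at hc
    apply hs
    unfold Dj
    rwa [abs_of_nonneg hxs.1]
  have hxI : ρ s x ∈ I := by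
    rw [hc] at hwI
    exact (Submodule.smul_mem_iff I hc0).mp hwI
  refine span_orbit hE hρ h hx I fun t => ?_
  have := hi (t * s⁻¹) _ hxI
  rwa [rho_mul, rho_inv'] at this

/-- stabilizer of a line -/
def stab (ρ : G →* (E ≃ₗ[ℝ] E)) (x : E) (hx : x ≠ 0) : Subgroup G where
  carrier := {s | ∃ c : ℝ, ρ s x = c • x}
  one_mem' := ⟨1, by simp⟩
  mul_mem' := by
    rintro a b ⟨c, hc⟩ ⟨d, hd⟩
    exact ⟨d * c, by rw [rho_mul, hd, map_smul, hc, smul_smul]⟩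
  inv_mem' := by
    rintro a ⟨c, hc⟩
    have hc0 : c ≠ 0 := by
      rintro rfl
      rw [zero_smul] at hc
      exact hx (by simpa using hc)
    refine ⟨c⁻¹, ?_⟩
    have : x = c • ρ a⁻¹ x := by rw [← map_smul, ← hc, rho_inv']
    conv_rhs => rw [this]
    rw [smul_smul, inv_mul_cancel₀ hc0, one_smul]

theorem fin_dim (hE : SufficientlyManyProjections E) (hρ : IsPositiveRep ρ)
    (h : ProjectionBandIrreducible ρ) [Nontrivial E] :
    FiniteDimensional ℝ E ∧ Module.finrank ℝ E ∣ Nat.card G := by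
  have hb := band_of_pb hE hρ h
  obtain ⟨x, hx⟩ := exists_atom hρ hb
  set H := stab ρ x hx.2.1 with hH
  let v : G ⧸ H → E := fun q => ρ q.out x
  have hli : LinearIndependent ℝ v := by
    refine lin_indep v (fun q => (hx.rho hρ _).2.1) ?_
    intro q r hqr
    rcases hx.disj hE (hx.rho hρ (q.out⁻¹ * r.out)) with hd | ⟨c, hc⟩
    · have := rho_dj hρ q.out hd
      rw [rho_mul, rho_inv] at this
      exact this
    · exfalso
      apply hqr
      have hm : q.out⁻¹ * r.out ∈ H := ⟨c, hc⟩
      have := QuotientGroup.eq.mpr hm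
      rwa [QuotientGroup.out_eq', QuotientGroup.out_eq'] at this
  have hsp : Submodule.span ℝ (Set.range v) = ⊤ := by
    refine span_orbit hE hρ h hx _ fun s => ?_
    have hm : (s : G ⧸ H).out⁻¹ * s ∈ H := by
      rw [← QuotientGroup.eq, QuotientGroup.out_eq']
    obtain ⟨c, hc⟩ := hm
    have : ρ s x = c • v (s : G ⧸ H) := by
      change ρ s x = c • ρ (s : G ⧸ H).out x
      rw [← map_smul, ← hc, rho_mul, rho_inv]
    rw [this]
    exact Submodule.smul_mem _ _ (Submodule.subset_span ⟨_, rfl⟩)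
  let b := Module.Basis.mk hli hsp.ge
  refine ⟨Module.Finite.of_basis b, ?_⟩
  rw [Module.finrank_eq_nat_card_basis b]
  exact Subgroup.index_dvd_card H

end fin

end RS

/-- For a positive representation `ρ` of a finite group `G` in a Riesz space `E` with
sufficiently many projections the following are equivalent: order indecomposability,
projection band irreducibility, band irreducibility, ideal irreducibility and principal
band irreducibility; if they hold then `E` is finite dimensional and, when `E` is
nonzero, the dimension of `E` divides the order of `G`. -/
theorem stmt8 {G E : Type*} [Group G] [Finite G] [AddCommGroup E] [Lattice E] [Module ℝ E]
    (hadd : ∀ x y z : E, x ≤ y → x + z ≤ y + z)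
    (hsmul : ∀ (c : ℝ) (x : E), 0 ≤ c → 0 ≤ x → 0 ≤ c • x)
    (hE : SufficientlyManyProjections E)
    (ρ : G →* (E ≃ₗ[ℝ] E)) (hρ : IsPositiveRep ρ) :
    (OrderIndecomposable ρ ↔ ProjectionBandIrreducible ρ) ∧
    (ProjectionBandIrreducible ρ ↔ BandIrreducible ρ) ∧
    (BandIrreducible ρ ↔ IdealIrreducible ρ) ∧
    (IdealIrreducible ρ ↔ PrincipalBandIrreducible ρ) ∧
    (PrincipalBandIrreducible ρ →
      FiniteDimensional ℝ E ∧ (Nontrivial E → Module.finrank ℝ E ∣ Nat.card G)) := by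
  haveI : IsOrderedAddMonoid E := { add_le_add_left := fun a b h c => hadd a b c h }
  haveI : PosSMulMono ℝ E := ⟨fun c hc x y hxy => by
    have h1 : 0 ≤ y - x := sub_nonneg.mpr hxy
    have h2 := hsmul c _ hc h1
    rw [smul_sub] at h2
    exact sub_nonneg.mp h2⟩
  have ib : IdealIrreducible ρ → BandIrreducible ρ := fun h B hB hi => h B hB.1 hi
  have bp : BandIrreducible ρ → ProjectionBandIrreducible ρ := fun h B hB hi => h B hB.1 hi
  have bpr : BandIrreducible ρ → PrincipalBandIrreducible ρ := fun h B hB hi => h B hB.1 hi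
  have pi := RS.ideal_of_pb hE hρ
  have prb := RS.band_of_principal hρ
  refine ⟨RS.oi_iff hρ, ⟨fun h => ib (pi h), bp⟩, ⟨fun h => pi (bp h), ib⟩,
    ⟨fun h => bpr (ib h), fun h => pi (bp (prb h))⟩, fun h => ?_⟩
  rcases subsingleton_or_nontrivial E with hs | hn
  · exact ⟨inferInstance, fun hn => (not_subsingleton E hs).elim⟩
  · have := RS.fin_dim hE hρ (bp (prb h))
    exact ⟨this.1, fun _ => this.2⟩
end

section
/- Let n ≥ 1 and let T be a lattice automorphism of ℝⁿ (a linear bijection of ℝⁿ that is an order isomorphism for the coordinatewise order). Then there exist a unique m ∈ (ℝ_{>0})ⁿ and a unique permutation σ ∈ S_n such that T(e_i) = m_{σ(i)} e_{σ(i)} for every i, i.e., T = m ∘ σ is the product of the diagonal operator given by m and the permutation operator given by σ. Consequently the map (m, σ) ↦ m ∘ σ is a group isomorphism from the semidirect product (ℝ_{>0})ⁿ ⋊ S_n (with S_n acting by permuting coordinates, so (m₁, σ₁)(m₂, σ₂) = (m₁·σ₁(m₂), σ₁σ₂) where σ(m)_i = m_{σ⁻¹(i)}) onto Aut⁺(ℝⁿ).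 -/
/-- The multiplicative group of positive real numbers. -/
abbrev PosReal : Type := {x : ℝ // 0 < x}

/-- The diagonal (multiplication) operator on `ℝⁿ` associated with a strictly positive
vector `m`. -/
noncomputable def diagEquiv (n : ℕ) (m : Fin n → PosReal) :
    (Fin n → ℝ) ≃ₗ[ℝ] (Fin n → ℝ) where
  toFun x := fun i => (m i : ℝ) * x i
  invFun y := fun i => (m i : ℝ)⁻¹ * y i
  map_add' x y := funext fun i => by dsimp; ring
  map_smul' c x := funext fun i => by dsimp; ring
  left_inv x := funext fun i => by
    have h : (m i : ℝ) ≠ 0 := (m i).2.ne'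
    dsimp; field_simp
  right_inv y := funext fun i => by
    have h : (m i : ℝ) ≠ 0 := (m i).2.ne'
    dsimp; field_simp

/-- The permutation operator on `ℝⁿ` associated with `σ ∈ Sₙ`; it maps `e_i` to
`e_{σ(i)}`. -/
noncomputable def permEquiv (n : ℕ) (σ : Equiv.Perm (Fin n)) :
    (Fin n → ℝ) ≃ₗ[ℝ] (Fin n → ℝ) where
  toFun x := fun i => x (σ⁻¹ i)
  invFun y := fun i => y (σ i)
  map_add' _ _ := rfl
  map_smul' _ _ := rfl
  left_inv x := funext fun i => by simp
  right_inv y := funext fun i => by simp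

/-- `Aut⁺(ℝⁿ)`: the group of lattice automorphisms of `ℝⁿ`, i.e. linear bijections
that are order isomorphisms for the coordinatewise order. -/
noncomputable def latticeAut (n : ℕ) : Subgroup ((Fin n → ℝ) ≃ₗ[ℝ] (Fin n → ℝ)) where
  carrier := {T | ∀ x y : Fin n → ℝ, x ≤ y ↔ T x ≤ T y}
  one_mem' := fun x y => Iff.rfl
  mul_mem' := by
    intro a b ha hb x y
    exact (hb x y).trans (ha (b x) (b y))
  inv_mem' := by
    intro a ha x y
    have := ha (a.symm x) (a.symm y)
    simpa using this.symm

/-- The action of `Sₙ` on the group `(ℝ_{>0})ⁿ`, `σ(m)_i = m_{σ⁻¹(i)}`. -/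
noncomputable def permMulAut (n : ℕ) : Equiv.Perm (Fin n) →* MulAut (Fin n → PosReal) where
  toFun σ :=
    { toFun := fun m i => m (σ⁻¹ i)
      invFun := fun m i => m (σ i)
      left_inv := fun m => funext fun i => by simp
      right_inv := fun m => funext fun i => by simp
      map_mul' := fun m₁ m₂ => rfl }
  map_one' := by ext m i; simp
  map_mul' σ τ := by ext m i; simp [mul_comm]

noncomputable example (n : ℕ) : Group (SemidirectProduct (Fin n → PosReal) (Equiv.Perm (Fin n)) (permMulAut n)) := inferInstance

theorem aux_single {n : ℕ} (m : Fin n → PosReal) (σ : Equiv.Perm (Fin n)) (i : Fin n) :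
    (diagEquiv n m * permEquiv n σ) (Pi.single i (1 : ℝ)) =
      (m (σ i) : ℝ) • (Pi.single (σ i) (1 : ℝ) : Fin n → ℝ) := by
  funext k
  change (m k : ℝ) * (Pi.single i (1 : ℝ) : Fin n → ℝ) (σ⁻¹ k) = _
  by_cases h : k = σ i
  · subst h; simp
  · have h' : σ⁻¹ k ≠ i := by
      rintro rfl
      simp at h
    rw [Pi.single_eq_of_ne h']
    simp [Pi.single_eq_of_ne h]

theorem aux_unique {n : ℕ} (m m' : Fin n → PosReal) (σ σ' : Equiv.Perm (Fin n))
    (h : ∀ i, (m (σ i) : ℝ) • (Pi.single (σ i) (1 : ℝ) : Fin n → ℝ) =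
      (m' (σ' i) : ℝ) • (Pi.single (σ' i) (1 : ℝ) : Fin n → ℝ)) : m = m' ∧ σ = σ' := by
  have hσ : σ = σ' := by
    ext1 i
    by_contra hne
    have := congrFun (h i) (σ i)
    simp [Pi.single_eq_of_ne hne] at this
    exact (m (σ i)).2.ne' this
  subst hσ
  refine ⟨?_, rfl⟩
  funext k
  have := congrFun (h (σ⁻¹ k)) k
  apply Subtype.ext
  simpa using this

theorem aux_exists {n : ℕ} (T : (Fin n → ℝ) ≃ₗ[ℝ] (Fin n → ℝ))
    (hT : ∀ x y : Fin n → ℝ, x ≤ y ↔ T x ≤ T y) :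
    ∃ (m : Fin n → PosReal) (σ : Equiv.Perm (Fin n)), ∀ i : Fin n,
      T (Pi.single i (1 : ℝ)) = (m (σ i) : ℝ) • (Pi.single (σ i) (1 : ℝ) : Fin n → ℝ) := by
  have key : ∀ i : Fin n, ∃ (j : Fin n) (c : PosReal),
      T (Pi.single i (1 : ℝ)) = (c : ℝ) • (Pi.single j (1 : ℝ) : Fin n → ℝ) := by
    intro i
    have hpos : (0 : Fin n → ℝ) ≤ T (Pi.single i (1 : ℝ)) := by
      have := (hT 0 (Pi.single i (1 : ℝ))).1 (by simp)
      simpa using this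
    have hne : T (Pi.single i (1 : ℝ)) ≠ 0 := by
      intro h
      have := congrFun (T.map_eq_zero_iff.1 h) i
      simp at this
    obtain ⟨j, hj⟩ := Function.ne_iff.1 hne
    have hc : 0 < T (Pi.single i (1 : ℝ)) j := lt_of_le_of_ne (hpos j) (Ne.symm hj)
    set c := T (Pi.single i (1 : ℝ)) j with hcdef
    let s : Fin n → ℝ := T.symm (Pi.single j c)
    have hTs : T s = Pi.single j c := T.apply_symm_apply _
    have h0 : 0 ≤ s := by
      rw [hT, hTs, map_zero]
      simpa using hc.le
    have h1 : s ≤ Pi.single i (1 : ℝ) := by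
      rw [hT, hTs]
      intro k
      by_cases hk : k = j
      · subst hk; simp [hcdef]
      · rw [Pi.single_eq_of_ne hk]; exact hpos k
    have hs : s = s i • (Pi.single i (1 : ℝ) : Fin n → ℝ) := by
      funext k
      by_cases hk : k = i
      · subst hk; simp
      · have a := h0 k
        have b := h1 k
        rw [Pi.single_eq_of_ne hk] at b
        simp only [Pi.smul_apply, Pi.single_eq_of_ne hk, smul_zero]
        exact le_antisymm b a
    have hsc : s i • T (Pi.single i (1 : ℝ)) = Pi.single j c := by
      rw [← map_smul, ← hs, hTs]
    have hsi : s i = 1 := by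
      have := congrFun hsc j
      simp only [Pi.smul_apply, smul_eq_mul, Pi.single_eq_same, ← hcdef] at this
      exact (mul_eq_right₀ hc.ne').1 this
    refine ⟨j, ⟨c, hc⟩, ?_⟩
    rw [hsi, one_smul] at hsc
    rw [hsc, ← Pi.single_smul]
    simp
  choose f c hf using key
  have hinj : Function.Injective f := by
    intro a b hab
    have h : T ((c b : ℝ) • Pi.single a (1 : ℝ)) = T ((c a : ℝ) • Pi.single b (1 : ℝ)) := by
      rw [map_smul, map_smul, hf, hf, hab, smul_smul, smul_smul, mul_comm]
    by_contra hne
    have := congrFun (T.injective h) a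
    simp [Pi.single_eq_of_ne hne] at this
    exact (c b).2.ne' this
  let σ : Equiv.Perm (Fin n) := Equiv.ofBijective f (Finite.injective_iff_bijective.1 hinj)
  refine ⟨fun k => c (σ.symm k), σ, fun i => ?_⟩
  simp only [Equiv.symm_apply_apply]
  exact hf i

theorem aux_mem {n : ℕ} (m : Fin n → PosReal) (σ : Equiv.Perm (Fin n)) :
    diagEquiv n m * permEquiv n σ ∈ latticeAut n := by
  intro x y
  change _ ↔ ∀ k, (m k : ℝ) * x (σ⁻¹ k) ≤ (m k : ℝ) * y (σ⁻¹ k)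
  constructor
  · intro h k
    exact mul_le_mul_of_nonneg_left (h _) (m k).2.le
  · intro h k
    have := le_of_mul_le_mul_left (h (σ k)) (m (σ k)).2
    simpa using this

/-- The homomorphism `(m, σ) ↦ m ∘ σ`. -/
noncomputable def auxHom (n : ℕ) :
    SemidirectProduct (Fin n → PosReal) (Equiv.Perm (Fin n)) (permMulAut n) →* latticeAut n :=
  MonoidHom.mk' (fun p => ⟨diagEquiv n p.left * permEquiv n p.right, aux_mem _ _⟩) (by
    intro a b
    apply Subtype.ext
    apply LinearEquiv.ext
    intro x
    funext k
    change ((a.left k : ℝ) * (b.left (a.right⁻¹ k) : ℝ)) * x ((a.right * b.right)⁻¹ k) =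
      (a.left k : ℝ) * ((b.left (a.right⁻¹ k) : ℝ) * x (b.right⁻¹ (a.right⁻¹ k)))
    rw [mul_assoc, mul_inv_rev, Equiv.Perm.mul_apply])

theorem auxHom_bij (n : ℕ) : Function.Bijective (auxHom n) := by
  constructor
  · intro a b h
    have h' : diagEquiv n a.left * permEquiv n a.right =
        diagEquiv n b.left * permEquiv n b.right := congrArg Subtype.val h
    obtain ⟨h1, h2⟩ := aux_unique a.left b.left a.right b.right (fun i => by
      rw [← aux_single, ← aux_single, h'])
    exact SemidirectProduct.ext h1 h2
  · intro T
    obtain ⟨m, σ, h⟩ := aux_exists T.1 T.2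
    refine ⟨⟨m, σ⟩, Subtype.ext ?_⟩
    change diagEquiv n m * permEquiv n σ = T.1
    apply LinearEquiv.toLinearMap_injective
    apply (Pi.basisFun ℝ (Fin n)).ext
    intro i
    rw [Pi.basisFun_apply]
    exact (aux_single m σ i).trans (h i).symm

/-- Every lattice automorphism `T` of `ℝⁿ` is uniquely the product of a strictly
positive diagonal operator and a permutation operator (`T e_i = m_{σ(i)} e_{σ(i)}`);
consequently `(m, σ) ↦ m ∘ σ` is a group isomorphism from the semidirect product
`(ℝ_{>0})ⁿ ⋊ Sₙ` onto `Aut⁺(ℝⁿ)`. -/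
theorem stmt9 (n : ℕ) (hn : 1 ≤ n) (T : (Fin n → ℝ) ≃ₗ[ℝ] (Fin n → ℝ))
    (hT : ∀ x y : Fin n → ℝ, x ≤ y ↔ T x ≤ T y) :
    (∃! p : (Fin n → PosReal) × Equiv.Perm (Fin n),
        ∀ i : Fin n,
          T (Pi.single i (1 : ℝ)) =
            (p.1 (p.2 i) : ℝ) • (Pi.single (p.2 i) (1 : ℝ) : Fin n → ℝ)) ∧
    ∃ iso : SemidirectProduct (Fin n → PosReal) (Equiv.Perm (Fin n)) (permMulAut n)
        ≃* latticeAut n,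
      ∀ (m : Fin n → PosReal) (σ : Equiv.Perm (Fin n)),
        ((iso ⟨m, σ⟩ : latticeAut n) : (Fin n → ℝ) ≃ₗ[ℝ] (Fin n → ℝ)) =
          diagEquiv n m * permEquiv n σ := by
  refine ⟨?_, MulEquiv.ofBijective (auxHom n) (auxHom_bij n), fun m σ => rfl⟩
  obtain ⟨m, σ, h⟩ := aux_exists T hT
  refine ⟨(m, σ), h, ?_⟩
  rintro ⟨m', σ'⟩ h'
  obtain ⟨h1, h2⟩ := aux_unique m' m σ' σ (fun i => (h' i).symm.trans (h i))
  rw [h1, h2]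
end
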